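/- arXiv:1903.07192 — 6 statements merged into one kernel-verified Lean document; each statement's English description precedes it below -/
import Mathlib

section
/- Fix ρ ∈ (0,1) and ν ∈ ℝ. For the quantum walk driven by the matrix V alone (without the flip U_f), for every real number x, lim_{t→∞} Σ_{y ∈ ℤ, y ≤ x·t} P(X_t = y) = ∫_{−∞}^{x} g(y) dy, where g(y) = ρ·Δ(y) / (π(1−y²)√(ρ₀²−y²)) for y ∈ (−ρ₀, ρ₀) and g(y) = 0 otherwise, with Δ(y) = 1 + {|α|² − |β|² − (2ρ/ρ₀)(Re(α·conj(β))cos ν + Im(α·conj(β))sin ν)}·y. -/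
open Real Filter Topology MeasureTheory

noncomputable section

/-- `ρ₀ = √(1-ρ²)`. -/
def rz (ρ : ℝ) : ℝ := Real.sqrt (1 - ρ ^ 2)

/-- `α₀ = ρ e^{iν}`. -/
def az (ρ ν : ℝ) : ℂ := (ρ : ℂ) * Complex.exp (Complex.I * (ν : ℂ))

/-- `C₋`. -/
def Cm (ρ ν : ℝ) : Matrix (Fin 2) (Fin 2) ℂ :=
  !![0, 0; ((rz ρ : ℝ) : ℂ) * (starRingEnd ℂ) (az ρ ν), (((rz ρ) ^ 2 : ℝ) : ℂ)]

/-- `C₀`. -/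
def C0 (ρ ν : ℝ) : Matrix (Fin 2) (Fin 2) ℂ :=
  !![-((ρ ^ 2 : ℝ) : ℂ), -(az ρ ν) * ((rz ρ : ℝ) : ℂ);
      ((rz ρ : ℝ) : ℂ) * (starRingEnd ℂ) (az ρ ν), -((ρ ^ 2 : ℝ) : ℂ)]

/-- `C₊`. -/
def Cp (ρ ν : ℝ) : Matrix (Fin 2) (Fin 2) ℂ :=
  !![(((rz ρ) ^ 2 : ℝ) : ℂ), -(az ρ ν) * ((rz ρ : ℝ) : ℂ); 0, 0]

/-- The quantum walk driven by the matrix `V` alone. -/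
def cwalk (ρ ν : ℝ) (α β : ℂ) : ℕ → ℤ → Fin 2 → ℂ
  | 0, x => if x = 0 then ![α, β] else 0
  | t + 1, x =>
      (Cm ρ ν).mulVec (cwalk ρ ν α β t (x + 1)) + (C0 ρ ν).mulVec (cwalk ρ ν α β t x)
        + (Cp ρ ν).mulVec (cwalk ρ ν α β t (x - 1))

/-- `P(X_t = x) = ‖Ψ_t(x)‖²`. -/
def cprob (ρ ν : ℝ) (α β : ℂ) (t : ℕ) (x : ℤ) : ℝ :=
  ‖cwalk ρ ν α β t x 0‖ ^ 2 + ‖cwalk ρ ν α β t x 1‖ ^ 2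

/-- `Δ(y)`. -/
def Delta (ρ ν : ℝ) (α β : ℂ) (y : ℝ) : ℝ :=
  1 + (‖α‖ ^ 2 - ‖β‖ ^ 2
    - (2 * ρ / rz ρ) * ((α * (starRingEnd ℂ) β).re * Real.cos ν
        + (α * (starRingEnd ℂ) β).im * Real.sin ν)) * y

/-- The limit density `g` for the walk driven by `V` alone. -/
def densV (ρ ν : ℝ) (α β : ℂ) (y : ℝ) : ℝ :=
  if y ∈ Set.Ioo (-(rz ρ)) (rz ρ) then
    ρ * Delta ρ ν α β y / (π * (1 - y ^ 2) * Real.sqrt ((rz ρ) ^ 2 - y ^ 2))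
  else 0

def sw (ρ κ : ℝ) : ℝ := Real.sqrt (1 - (rz ρ) ^ 2 * Real.cos κ ^ 2)
def om (ρ κ : ℝ) : ℝ := Real.arccos (rz ρ * Real.cos κ)
def vel (ρ κ : ℝ) : ℝ := rz ρ * Real.sin κ / sw ρ κ
def qq (ρ ν κ : ℝ) : ℂ := az ρ ν * Complex.exp (-(Complex.I * κ)) / (sw ρ κ : ℂ)
def qb (ρ ν κ : ℝ) : ℂ := (starRingEnd ℂ) (az ρ ν) * Complex.exp (Complex.I * κ) / (sw ρ κ : ℂ)
def et0 (ρ ν : ℝ) (α β : ℂ) (κ : ℝ) : ℂ := -(Complex.I * vel ρ κ) * α - qq ρ ν κ * β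
def et1 (ρ ν : ℝ) (α β : ℂ) (κ : ℝ) : ℂ := qb ρ ν κ * α + Complex.I * vel ρ κ * β

theorem rz_sq {ρ : ℝ} (hρ : ρ ∈ Set.Ioo (0 : ℝ) 1) : rz ρ ^ 2 = 1 - ρ ^ 2 := by
  unfold rz
  rw [Real.sq_sqrt]
  nlinarith [hρ.1, hρ.2]

theorem rz_pos {ρ : ℝ} (hρ : ρ ∈ Set.Ioo (0 : ℝ) 1) : 0 < rz ρ := by
  unfold rz
  apply Real.sqrt_pos.2
  nlinarith [hρ.1, hρ.2]

theorem rz_lt {ρ : ℝ} (hρ : ρ ∈ Set.Ioo (0 : ℝ) 1) : rz ρ < 1 := by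
  have := rz_sq hρ
  nlinarith [hρ.1, hρ.2, rz_pos hρ]

theorem sw_arg {ρ : ℝ} (hρ : ρ ∈ Set.Ioo (0 : ℝ) 1) (κ : ℝ) :
    1 - (rz ρ) ^ 2 * Real.cos κ ^ 2 = ρ ^ 2 + rz ρ ^ 2 * Real.sin κ ^ 2 := by
  have h := rz_sq hρ
  have h2 := Real.sin_sq_add_cos_sq κ
  linear_combination -h - (rz ρ)^2 * h2

theorem sw_arg_pos {ρ : ℝ} (hρ : ρ ∈ Set.Ioo (0 : ℝ) 1) (κ : ℝ) :
    0 < 1 - (rz ρ) ^ 2 * Real.cos κ ^ 2 := by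
  rw [sw_arg hρ]
  have := hρ.1
  positivity

theorem sw_sq {ρ : ℝ} (hρ : ρ ∈ Set.Ioo (0 : ℝ) 1) (κ : ℝ) :
    sw ρ κ ^ 2 = 1 - (rz ρ) ^ 2 * Real.cos κ ^ 2 := by
  unfold sw
  rw [Real.sq_sqrt (sw_arg_pos hρ κ).le]

theorem sw_pos {ρ : ℝ} (hρ : ρ ∈ Set.Ioo (0 : ℝ) 1) (κ : ℝ) : 0 < sw ρ κ :=
  Real.sqrt_pos.2 (sw_arg_pos hρ κ)

theorem arg_bd {ρ : ℝ} (hρ : ρ ∈ Set.Ioo (0 : ℝ) 1) (κ : ℝ) :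
    -1 < rz ρ * Real.cos κ ∧ rz ρ * Real.cos κ < 1 := by
  have := sw_arg_pos hρ κ
  apply abs_lt.1
  rw [← sq_lt_one_iff_abs_lt_one]
  nlinarith

theorem cos_om {ρ : ℝ} (hρ : ρ ∈ Set.Ioo (0 : ℝ) 1) (κ : ℝ) :
    Real.cos (om ρ κ) = rz ρ * Real.cos κ :=
  Real.cos_arccos (arg_bd hρ κ).1.le (arg_bd hρ κ).2.le

theorem sin_om (ρ κ : ℝ) : Real.sin (om ρ κ) = sw ρ κ := by
  unfold om sw
  rw [Real.sin_arccos]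
  ring_nf

theorem om_deriv {ρ : ℝ} (hρ : ρ ∈ Set.Ioo (0 : ℝ) 1) (κ : ℝ) :
    HasDerivAt (om ρ) (vel ρ κ) κ := by
  have h := (Real.hasDerivAt_arccos (arg_bd hρ κ).1.ne' (arg_bd hρ κ).2.ne).comp κ
    ((Real.hasDerivAt_cos κ).const_mul (rz ρ))
  refine h.congr_deriv ?_
  unfold vel sw
  rw [mul_pow]
  ring

theorem vel_qq {ρ : ℝ} (hρ : ρ ∈ Set.Ioo (0 : ℝ) 1) (ν κ : ℝ) :
    (vel ρ κ : ℂ) ^ 2 + qq ρ ν κ * qb ρ ν κ = 1 := by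
  have hs : (sw ρ κ : ℂ) ≠ 0 := by exact_mod_cast (sw_pos hρ κ).ne'
  have h1 : (sw ρ κ : ℂ) ^ 2 = ρ ^ 2 + (rz ρ : ℂ) ^ 2 * (Real.sin κ : ℂ) ^ 2 := by
    exact_mod_cast (sw_sq hρ κ).trans (sw_arg hρ κ)
  have h2 : az ρ ν * (starRingEnd ℂ) (az ρ ν) = (ρ : ℂ) ^ 2 := by
    unfold az
    rw [map_mul, ← Complex.exp_conj, Complex.conj_ofReal, map_mul, Complex.conj_I,
      Complex.conj_ofReal]
    rw [mul_mul_mul_comm, ← Complex.exp_add]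
    simp
    ring
  have h3 : Complex.exp (-(Complex.I * κ)) * Complex.exp (Complex.I * κ) = 1 := by
    rw [← Complex.exp_add]; simp
  unfold vel qq qb
  push_cast at h1 ⊢
  field_simp
  rw [h1]
  linear_combination h2 + az ρ ν * (starRingEnd ℂ) (az ρ ν) * h3

theorem m_entries {ρ : ℝ} (hρ : ρ ∈ Set.Ioo (0 : ℝ) 1) (ν κ : ℝ) :
    (-(ρ : ℂ) ^ 2 + (rz ρ : ℂ) ^ 2 * Complex.exp (-(2 * Complex.I * κ))
      = Real.cos (2 * om ρ κ) - Real.sin (2 * om ρ κ) * (Complex.I * vel ρ κ)) ∧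
    (-(az ρ ν) * rz ρ * (1 + Complex.exp (-(2 * Complex.I * κ)))
      = -(Real.sin (2 * om ρ κ) * qq ρ ν κ)) ∧
    (rz ρ * (starRingEnd ℂ) (az ρ ν) * (1 + Complex.exp (2 * Complex.I * κ))
      = Real.sin (2 * om ρ κ) * qb ρ ν κ) ∧
    (-(ρ : ℂ) ^ 2 + (rz ρ : ℂ) ^ 2 * Complex.exp (2 * Complex.I * κ)
      = Real.cos (2 * om ρ κ) + Real.sin (2 * om ρ κ) * (Complex.I * vel ρ κ)) := by
  have hs : (sw ρ κ : ℂ) ≠ 0 := by exact_mod_cast (sw_pos hρ κ).ne'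
  have hr : (rz ρ : ℂ) ^ 2 = 1 - (ρ : ℂ) ^ 2 := by exact_mod_cast rz_sq hρ
  have hC : ((Real.cos (2 * om ρ κ) : ℝ) : ℂ) = 2 * (rz ρ) ^ 2 * (Real.cos κ : ℂ) ^ 2 - 1 := by
    rw [Real.cos_two_mul, cos_om hρ]; push_cast; ring
  have hS : ((Real.sin (2 * om ρ κ) : ℝ) : ℂ) = 2 * sw ρ κ * (rz ρ * (Real.cos κ : ℂ)) := by
    rw [Real.sin_two_mul, cos_om hρ, sin_om]; push_cast; ring
  have hE : Complex.exp (-(Complex.I * κ)) = (Real.cos κ : ℂ) - Complex.I * (Real.sin κ : ℂ) := by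
    rw [← mul_neg, mul_comm, Complex.exp_mul_I]; simp; ring
  have hE' : Complex.exp ((Complex.I * κ)) = (Real.cos κ : ℂ) + Complex.I * (Real.sin κ : ℂ) := by
    rw [mul_comm, Complex.exp_mul_I]; simp; ring
  have hD : Complex.exp (-(2 * Complex.I * κ)) = ((Real.cos κ : ℂ) - Complex.I * (Real.sin κ : ℂ)) ^ 2 := by
    rw [← hE, ← Complex.exp_nat_mul]; congr 1; push_cast; ring
  have hD' : Complex.exp ((2 * Complex.I * κ)) = ((Real.cos κ : ℂ) + Complex.I * (Real.sin κ : ℂ)) ^ 2 := by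
    rw [← hE', ← Complex.exp_nat_mul]; congr 1; push_cast; ring
  have h2 : (Real.sin κ : ℂ) ^ 2 + (Real.cos κ : ℂ) ^ 2 = 1 := by
    exact_mod_cast Real.sin_sq_add_cos_sq κ
  have hI := Complex.I_sq
  have hv : (vel ρ κ : ℂ) = rz ρ * (Real.sin κ : ℂ) / sw ρ κ := by unfold vel; push_cast; rfl
  rw [hC, hS, hD, hD', hv]
  unfold qq qb
  rw [hE, hE']
  generalize (Real.sin κ : ℂ) = s at *
  generalize (Real.cos κ : ℂ) = c at *
  generalize (rz ρ : ℂ) = r at *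
  generalize (sw ρ κ : ℂ) = w at *
  generalize (starRingEnd ℂ) (az ρ ν) = a' at *
  generalize (az ρ ν : ℂ) = a at *
  refine ⟨?_, ?_, ?_, ?_⟩
  · field_simp
    linear_combination -hr  + r^2 * s^2 * hI - r^2 * h2
  · field_simp
    linear_combination (-s^2*r*a) * hI + (a*r) * h2
  · field_simp
    linear_combination (s^2*r*a') * hI - (a'*r) * h2
  · field_simp
    linear_combination -hr  + r^2 * s^2 * hI - r^2 * h2

theorem hs_conv {f g : ℤ → ℂ} {a b : ℂ} (h : HasSum g b) (hf : ∀ x, f x = g x) (hab : a = b) :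
    HasSum f a := by
  rw [show f = g from funext hf, hab]
  exact h

/-- The closed form of the Fourier transform, first component. -/
def B0 (ρ ν : ℝ) (α β : ℂ) (t : ℕ) (κ : ℝ) : ℂ :=
  Real.cos (2 * t * om ρ κ) * α + Real.sin (2 * t * om ρ κ) * et0 ρ ν α β κ
/-- The closed form of the Fourier transform, second component. -/
def B1 (ρ ν : ℝ) (α β : ℂ) (t : ℕ) (κ : ℝ) : ℂ :=
  Real.cos (2 * t * om ρ κ) * β + Real.sin (2 * t * om ρ κ) * et1 ρ ν α β κ

theorem hat_closed {ρ : ℝ} (hρ : ρ ∈ Set.Ioo (0 : ℝ) 1) (ν : ℝ) (α β : ℂ) (κ : ℝ) (t : ℕ) :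
    HasSum (fun x : ℤ => Complex.exp (-(2 * Complex.I * κ * x)) * cwalk ρ ν α β t x 0)
      (B0 ρ ν α β t κ) ∧
    HasSum (fun x : ℤ => Complex.exp (-(2 * Complex.I * κ * x)) * cwalk ρ ν α β t x 1)
      (B1 ρ ν α β t κ) := by
  induction t with
  | zero =>
    constructor
    · refine hs_conv (hasSum_ite_eq (0 : ℤ) α) ?_ ?_
      · intro x
        by_cases h : x = 0 <;> simp [cwalk, h]
      · simp [B0]
    · refine hs_conv (hasSum_ite_eq (0 : ℤ) β) ?_ ?_
      · intro x
        by_cases h : x = 0 <;> simp [cwalk, h]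
      · simp [B1]
  | succ t ih =>
    obtain ⟨iA, iB⟩ := ih
    obtain ⟨h00, h01, h10, h11⟩ := m_entries hρ ν κ
    have shiftm : ∀ {f : ℤ → ℂ} {A : ℂ},
        HasSum (fun x : ℤ => Complex.exp (-(2 * Complex.I * κ * x)) * f x) A →
        HasSum (fun x : ℤ => Complex.exp (-(2 * Complex.I * κ * x)) * f (x - 1))
          (Complex.exp (-(2 * Complex.I * κ)) * A) := by
      intro f A h
      have h1 := ((Equiv.subRight (1 : ℤ)).hasSum_iff.2 h).mul_left
        (Complex.exp (-(2 * Complex.I * κ)))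
      refine hs_conv h1 ?_ rfl
      intro x
      simp only [Function.comp, Equiv.subRight_apply]
      rw [← mul_assoc, ← Complex.exp_add]
      congr 2
      push_cast; ring
    have shiftp : ∀ {f : ℤ → ℂ} {A : ℂ},
        HasSum (fun x : ℤ => Complex.exp (-(2 * Complex.I * κ * x)) * f x) A →
        HasSum (fun x : ℤ => Complex.exp (-(2 * Complex.I * κ * x)) * f (x + 1))
          (Complex.exp (2 * Complex.I * κ) * A) := by
      intro f A h
      have h1 := ((Equiv.addRight (1 : ℤ)).hasSum_iff.2 h).mul_left
        (Complex.exp (2 * Complex.I * κ))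
      refine hs_conv h1 ?_ rfl
      intro x
      simp only [Function.comp, Equiv.coe_addRight]
      rw [← mul_assoc, ← Complex.exp_add]
      congr 2
      push_cast; ring
    have hc : ((Real.cos (2 * ((t + 1 : ℕ) : ℝ) * om ρ κ) : ℝ) : ℂ)
        = Real.cos (2 * t * om ρ κ) * Real.cos (2 * om ρ κ)
          - Real.sin (2 * t * om ρ κ) * Real.sin (2 * om ρ κ) := by
      rw [show 2 * ((t + 1 : ℕ) : ℝ) * om ρ κ = 2 * t * om ρ κ + 2 * om ρ κ by push_cast; ring,
        Real.cos_add]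
      push_cast; ring
    have hs : ((Real.sin (2 * ((t + 1 : ℕ) : ℝ) * om ρ κ) : ℝ) : ℂ)
        = Real.sin (2 * t * om ρ κ) * Real.cos (2 * om ρ κ)
          + Real.cos (2 * t * om ρ κ) * Real.sin (2 * om ρ κ) := by
      rw [show 2 * ((t + 1 : ℕ) : ℝ) * om ρ κ = 2 * t * om ρ κ + 2 * om ρ κ by push_cast; ring,
        Real.sin_add]
      push_cast; ring
    have hN := vel_qq hρ ν κ
    have hI := Complex.I_sq
    constructor
    · have := (((iA.mul_left (-(ρ : ℂ) ^ 2)).add ((shiftm iA).mul_left ((rz ρ : ℂ) ^ 2))).add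
        (iB.mul_left (-(az ρ ν) * rz ρ))).add ((shiftm iB).mul_left (-(az ρ ν) * rz ρ))
      refine hs_conv this ?_ ?_
      · intro x
        simp [cwalk, Cm, C0, Cp, Matrix.mulVec, dotProduct, Fin.sum_univ_two]
        ring
      · trans (-(ρ : ℂ) ^ 2 + (rz ρ : ℂ) ^ 2 * Complex.exp (-(2 * Complex.I * κ))) * B0 ρ ν α β t κ
          + (-(az ρ ν) * rz ρ * (1 + Complex.exp (-(2 * Complex.I * κ)))) * B1 ρ ν α β t κ
        · rw [h00, h01]
          simp only [B0, B1, et0, et1]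
          rw [hc, hs]
          generalize (Real.sin (2 * t * om ρ κ) : ℂ) = s at *
          generalize (Real.cos (2 * t * om ρ κ) : ℂ) = c at *
          generalize (Real.sin (2 * om ρ κ) : ℂ) = S at *
          generalize (Real.cos (2 * om ρ κ) : ℂ) = C at *
          linear_combination (s * S * α) * hN - (s * S * (vel ρ κ : ℂ) ^ 2 * α) * hI
        · ring
    · have := (((iB.mul_left (-(ρ : ℂ) ^ 2)).add ((shiftp iB).mul_left ((rz ρ : ℂ) ^ 2))).add
        (iA.mul_left (rz ρ * (starRingEnd ℂ) (az ρ ν)))).add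
          ((shiftp iA).mul_left (rz ρ * (starRingEnd ℂ) (az ρ ν)))
      refine hs_conv this ?_ ?_
      · intro x
        simp [cwalk, Cm, C0, Cp, Matrix.mulVec, dotProduct, Fin.sum_univ_two]
        ring
      · trans (-(ρ : ℂ) ^ 2 + (rz ρ : ℂ) ^ 2 * Complex.exp (2 * Complex.I * κ)) * B1 ρ ν α β t κ
          + (rz ρ * (starRingEnd ℂ) (az ρ ν) * (1 + Complex.exp (2 * Complex.I * κ))) * B0 ρ ν α β t κ
        · rw [h10, h11]
          simp only [B0, B1, et0, et1]
          rw [hc, hs]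
          generalize (Real.sin (2 * t * om ρ κ) : ℂ) = s at *
          generalize (Real.cos (2 * t * om ρ κ) : ℂ) = c at *
          generalize (Real.sin (2 * om ρ κ) : ℂ) = S at *
          generalize (Real.cos (2 * om ρ κ) : ℂ) = C at *
          linear_combination (s * S * β) * hN - (s * S * (vel ρ κ : ℂ) ^ 2 * β) * hI
        · ring

theorem cwalk_supp (ρ ν : ℝ) (α β : ℂ) (t : ℕ) :
    ∀ x : ℤ, x ∉ Finset.Icc (-(t : ℤ)) t → cwalk ρ ν α β t x = 0 := by
  induction t with
  | zero =>
    intro x hx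
    have : x ≠ 0 := by rintro rfl; simp at hx
    simp [cwalk, this]
  | succ t ih =>
    intro x hx
    simp only [Finset.mem_Icc, not_and_or, not_le] at ih hx
    simp only [cwalk]
    rw [ih (x + 1) (by push_cast at hx; omega), ih x (by push_cast at hx; omega),
      ih (x - 1) (by push_cast at hx; omega)]
    simp

theorem hat_fin {ρ : ℝ} (hρ : ρ ∈ Set.Ioo (0 : ℝ) 1) (ν : ℝ) (α β : ℂ) (κ : ℝ) (t : ℕ) :
    (B0 ρ ν α β t κ = ∑ x ∈ Finset.Icc (-(t : ℤ)) t,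
      Complex.exp (-(2 * Complex.I * κ * x)) * cwalk ρ ν α β t x 0) ∧
    (B1 ρ ν α β t κ = ∑ x ∈ Finset.Icc (-(t : ℤ)) t,
      Complex.exp (-(2 * Complex.I * κ * x)) * cwalk ρ ν α β t x 1) := by
  obtain ⟨h0, h1⟩ := hat_closed hρ ν α β κ t
  constructor
  · refine h0.unique (hasSum_sum_of_ne_finset_zero ?_)
    intro x hx
    simp [cwalk_supp ρ ν α β t x hx]
  · refine h1.unique (hasSum_sum_of_ne_finset_zero ?_)
    intro x hx
    simp [cwalk_supp ρ ν α β t x hx]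

theorem exp_int_integral (m : ℤ) :
    ∫ κ in (0 : ℝ)..(2 * π), Complex.exp (2 * Complex.I * κ * m) = if m = 0 then (2 * π : ℂ) else 0 := by
  split_ifs with h
  · subst h
    simp
  · have hc : (2 * Complex.I * m : ℂ) ≠ 0 := by simp [h]
    have h1 := integral_exp_mul_complex (a := 0) (b := 2 * π) hc
    rw [show (fun κ : ℝ => Complex.exp (2 * Complex.I * κ * m))
      = fun κ : ℝ => Complex.exp (2 * Complex.I * m * κ) from by ext κ; ring_nf]
    rw [h1]
    have h2 : Complex.exp (2 * Complex.I * m * ((2 * π : ℝ) : ℂ)) = 1 := by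
      rw [show (2 * Complex.I * m * ((2 * π : ℝ) : ℂ)) = ((2 * m : ℤ) : ℂ) * (2 * π * Complex.I) by
        push_cast; ring]
      exact Complex.exp_int_mul_two_pi_mul_I _
    rw [h2]
    simp

theorem parseval (S : Finset ℤ) (a : ℤ → ℂ) (θ : ℝ) :
    ∫ κ in (0 : ℝ)..(2 * π),
      (starRingEnd ℂ) (∑ x ∈ S, Complex.exp (-(2 * Complex.I * κ * x)) * a x) *
        (∑ y ∈ S, Complex.exp (-(2 * Complex.I * ((κ - θ : ℝ) : ℂ) * y)) * a y)
      = 2 * π * ∑ x ∈ S, ((‖a x‖ ^ 2 : ℝ) : ℂ) * Complex.exp (2 * Complex.I * θ * x) := by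
  have h1 : ∀ κ : ℝ, (starRingEnd ℂ) (∑ x ∈ S, Complex.exp (-(2 * Complex.I * κ * x)) * a x) *
        (∑ y ∈ S, Complex.exp (-(2 * Complex.I * ((κ - θ : ℝ) : ℂ) * y)) * a y)
      = ∑ x ∈ S, ∑ y ∈ S, ((starRingEnd ℂ) (a x) * a y * Complex.exp (2 * Complex.I * θ * y)) *
          Complex.exp (2 * Complex.I * κ * ((x - y : ℤ) : ℂ)) := by
    intro κ
    rw [map_sum, Finset.sum_mul_sum]
    refine Finset.sum_congr rfl fun x _ => Finset.sum_congr rfl fun y _ => ?_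
    rw [map_mul, ← Complex.exp_conj]
    have e1 : (starRingEnd ℂ) (-(2 * Complex.I * κ * x)) = 2 * Complex.I * κ * x := by
      have c2 : (starRingEnd ℂ) 2 = 2 := Complex.conj_ofNat 2
      simp [map_mul, c2]
    rw [e1]
    have e2 : Complex.exp (2 * Complex.I * θ * y) * Complex.exp (2 * Complex.I * κ * ((x - y : ℤ) : ℂ))
      = Complex.exp (2 * Complex.I * κ * x) * Complex.exp (-(2 * Complex.I * ((κ - θ : ℝ) : ℂ) * y)) := by
      rw [← Complex.exp_add, ← Complex.exp_add]
      congr 1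
      push_cast; ring
    linear_combination (-((starRingEnd ℂ) (a x) * a y)) * e2
  simp_rw [h1]
  rw [intervalIntegral.integral_finsetSum]
  swap
  · intro x _
    apply Continuous.intervalIntegrable
    fun_prop
  rw [Finset.mul_sum]
  refine Finset.sum_congr rfl fun x hx => ?_
  rw [intervalIntegral.integral_finsetSum]
  swap
  · intro y _
    apply Continuous.intervalIntegrable
    fun_prop
  simp_rw [intervalIntegral.integral_const_mul, exp_int_integral]
  rw [Finset.sum_eq_single x]
  · simp only [sub_self, if_true]
    rw [← Complex.normSq_eq_norm_sq, Complex.normSq_eq_conj_mul_self]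
    ring
  · intro y _ hy
    rw [if_neg (by omega), mul_zero]
  · exact fun h => absurd hx h

def FF (ρ ν : ℝ) (α β : ℂ) (t : ℕ) (θ κ : ℝ) : ℂ :=
  (starRingEnd ℂ) (B0 ρ ν α β t κ) * B0 ρ ν α β t (κ - θ)
    + (starRingEnd ℂ) (B1 ρ ν α β t κ) * B1 ρ ν α β t (κ - θ)

theorem sw_cont (ρ : ℝ) : Continuous (sw ρ) := by unfold sw; fun_prop

theorem om_cont (ρ : ℝ) : Continuous (om ρ) := by
  unfold om
  exact Real.continuous_arccos.comp (by fun_prop)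

theorem vel_cont {ρ : ℝ} (hρ : ρ ∈ Set.Ioo (0 : ℝ) 1) : Continuous (vel ρ) := by
  unfold vel
  exact Continuous.div (by fun_prop) (sw_cont ρ) (fun κ => (sw_pos hρ κ).ne')

theorem swC_cont (ρ : ℝ) : Continuous (fun κ => (sw ρ κ : ℂ)) :=
  Complex.continuous_ofReal.comp (sw_cont ρ)

theorem qq_cont {ρ : ℝ} (hρ : ρ ∈ Set.Ioo (0 : ℝ) 1) (ν : ℝ) : Continuous (qq ρ ν) := by
  unfold qq
  exact Continuous.div (by fun_prop) (swC_cont ρ)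
    (fun κ => by exact_mod_cast (sw_pos hρ κ).ne')

theorem qb_cont {ρ : ℝ} (hρ : ρ ∈ Set.Ioo (0 : ℝ) 1) (ν : ℝ) : Continuous (qb ρ ν) := by
  unfold qb
  exact Continuous.div (by fun_prop) (swC_cont ρ)
    (fun κ => by exact_mod_cast (sw_pos hρ κ).ne')

theorem et0_cont {ρ : ℝ} (hρ : ρ ∈ Set.Ioo (0 : ℝ) 1) (ν : ℝ) (α β : ℂ) :
    Continuous (et0 ρ ν α β) := by
  unfold et0
  have := vel_cont hρ
  have := qq_cont hρ ν
  fun_prop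

theorem et1_cont {ρ : ℝ} (hρ : ρ ∈ Set.Ioo (0 : ℝ) 1) (ν : ℝ) (α β : ℂ) :
    Continuous (et1 ρ ν α β) := by
  unfold et1
  have := vel_cont hρ
  have := qb_cont hρ ν
  fun_prop

theorem B0_cont {ρ : ℝ} (hρ : ρ ∈ Set.Ioo (0 : ℝ) 1) (ν : ℝ) (α β : ℂ) (t : ℕ) :
    Continuous (B0 ρ ν α β t) := by
  unfold B0
  have := om_cont ρ
  have := et0_cont hρ ν α β
  fun_prop

theorem B1_cont {ρ : ℝ} (hρ : ρ ∈ Set.Ioo (0 : ℝ) 1) (ν : ℝ) (α β : ℂ) (t : ℕ) :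
    Continuous (B1 ρ ν α β t) := by
  unfold B1
  have := om_cont ρ
  have := et1_cont hρ ν α β
  fun_prop

theorem FF_cont {ρ : ℝ} (hρ : ρ ∈ Set.Ioo (0 : ℝ) 1) (ν : ℝ) (α β : ℂ) (t : ℕ) (θ : ℝ) :
    Continuous (FF ρ ν α β t θ) := by
  unfold FF
  have h0 := B0_cont hρ ν α β t
  have h1 := B1_cont hρ ν α β t
  have hc := Complex.continuous_conj
  exact ((hc.comp h0).mul (h0.comp (by fun_prop))).add ((hc.comp h1).mul (h1.comp (by fun_prop)))

theorem FF_integral {ρ : ℝ} (hρ : ρ ∈ Set.Ioo (0 : ℝ) 1) (ν : ℝ) (α β : ℂ) (t : ℕ) (θ : ℝ) :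
    ∫ κ in (0 : ℝ)..(2 * π), FF ρ ν α β t θ κ
      = 2 * π * ∑ x ∈ Finset.Icc (-(t : ℤ)) t,
          (cprob ρ ν α β t x : ℂ) * Complex.exp (2 * Complex.I * θ * x) := by
  have h0 := B0_cont hρ ν α β t
  have h1 := B1_cont hρ ν α β t
  have hc := Complex.continuous_conj
  unfold FF
  rw [intervalIntegral.integral_add]
  rotate_left
  · exact ((hc.comp h0).mul (h0.comp (by fun_prop))).intervalIntegrable _ _
  · exact ((hc.comp h1).mul (h1.comp (by fun_prop))).intervalIntegrable _ _
  simp_rw [fun κ => (hat_fin hρ ν α β κ t).1, fun κ => (hat_fin hρ ν α β κ t).2]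
  rw [parseval, parseval, ← mul_add, ← Finset.sum_add_distrib]
  congr 1
  refine Finset.sum_congr rfl fun x _ => ?_
  unfold cprob
  push_cast
  ring

theorem conj_qq (ρ ν κ : ℝ) : (starRingEnd ℂ) (qq ρ ν κ) = qb ρ ν κ := by
  unfold qq qb
  rw [map_div₀, map_mul, ← Complex.exp_conj]
  simp

theorem conj_qb (ρ ν κ : ℝ) : (starRingEnd ℂ) (qb ρ ν κ) = qq ρ ν κ := by
  rw [← conj_qq, Complex.conj_conj]

/-- the form `⟨φ, N φ⟩`. -/
def ip (ρ ν : ℝ) (α β : ℂ) (κ : ℝ) : ℂ :=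
  (starRingEnd ℂ) α * et0 ρ ν α β κ + (starRingEnd ℂ) β * et1 ρ ν α β κ

theorem norm_conj {α β : ℂ} (h : ‖α‖ ^ 2 + ‖β‖ ^ 2 = 1) :
    (starRingEnd ℂ) α * α + (starRingEnd ℂ) β * β = 1 := by
  rw [← Complex.normSq_eq_conj_mul_self, ← Complex.normSq_eq_conj_mul_self,
    Complex.normSq_eq_norm_sq, Complex.normSq_eq_norm_sq]
  exact_mod_cast h

theorem et_norm {ρ : ℝ} (hρ : ρ ∈ Set.Ioo (0 : ℝ) 1) (ν : ℝ) {α β : ℂ}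
    (h : ‖α‖ ^ 2 + ‖β‖ ^ 2 = 1) (κ : ℝ) :
    (starRingEnd ℂ) (et0 ρ ν α β κ) * et0 ρ ν α β κ
      + (starRingEnd ℂ) (et1 ρ ν α β κ) * et1 ρ ν α β κ = 1 := by
  have hN := vel_qq hρ ν κ
  have hI := Complex.I_sq
  have hn := norm_conj h
  unfold et0 et1
  simp only [map_sub, map_mul, map_add, map_neg, Complex.conj_I, Complex.conj_ofReal, conj_qq, conj_qb]
  linear_combination hn + ((starRingEnd ℂ) α * α + (starRingEnd ℂ) β * β) * hN
    - ((starRingEnd ℂ) α * α + (starRingEnd ℂ) β * β) * (vel ρ κ : ℂ) ^ 2 * hI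

theorem et_skew (ρ ν : ℝ) (α β : ℂ) (κ : ℝ) :
    (starRingEnd ℂ) (et0 ρ ν α β κ) * α + (starRingEnd ℂ) (et1 ρ ν α β κ) * β
      = - ip ρ ν α β κ := by
  unfold ip et0 et1
  simp only [map_sub, map_mul, map_add, map_neg, Complex.conj_I, Complex.conj_ofReal, conj_qq, conj_qb]
  ring

theorem et_norm' {ρ : ℝ} (hρ : ρ ∈ Set.Ioo (0 : ℝ) 1) (ν : ℝ) {α β : ℂ}
    (h : ‖α‖ ^ 2 + ‖β‖ ^ 2 = 1) (κ : ℝ) :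
    ‖et0 ρ ν α β κ‖ ^ 2 + ‖et1 ρ ν α β κ‖ ^ 2 = 1 := by
  have := et_norm hρ ν h κ
  rw [← Complex.normSq_eq_conj_mul_self, ← Complex.normSq_eq_conj_mul_self,
    Complex.normSq_eq_norm_sq, Complex.normSq_eq_norm_sq] at this
  exact_mod_cast this

theorem B_bd {ρ : ℝ} (hρ : ρ ∈ Set.Ioo (0 : ℝ) 1) (ν : ℝ) {α β : ℂ}
    (h : ‖α‖ ^ 2 + ‖β‖ ^ 2 = 1) (t : ℕ) (κ : ℝ) :
    ‖B0 ρ ν α β t κ‖ ≤ 2 ∧ ‖B1 ρ ν α β t κ‖ ≤ 2 := by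
  have h2 := et_norm' hρ ν h κ
  have key : ∀ (x : ℝ) (a b : ℂ), ‖a‖ ≤ 1 → ‖b‖ ≤ 1 →
      ‖(Real.cos x : ℂ) * a + (Real.sin x : ℂ) * b‖ ≤ 2 := by
    intro x a b ha hb
    refine (norm_add_le _ _).trans ?_
    rw [norm_mul, norm_mul, Complex.norm_real, Complex.norm_real, Real.norm_eq_abs, Real.norm_eq_abs]
    have h1 := Real.abs_cos_le_one x
    have h2 := Real.abs_sin_le_one x
    have h3 := mul_le_mul h1 ha (norm_nonneg _) zero_le_one
    have h4 := mul_le_mul h2 hb (norm_nonneg _) zero_le_one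
    linarith
  have sqb : ∀ x y : ℝ, x ^ 2 + y ^ 2 = 1 → x ≤ 1 ∧ y ≤ 1 := by
    intro x y hxy
    constructor <;> nlinarith [sq_nonneg x, sq_nonneg y]
  exact ⟨key _ _ _ (sqb _ _ h).1 (sqb _ _ h2).1, key _ _ _ (sqb _ _ h).2 (sqb _ _ h2).2⟩

theorem FF_bd {ρ : ℝ} (hρ : ρ ∈ Set.Ioo (0 : ℝ) 1) (ν : ℝ) {α β : ℂ}
    (h : ‖α‖ ^ 2 + ‖β‖ ^ 2 = 1) (t : ℕ) (θ κ : ℝ) : ‖FF ρ ν α β t θ κ‖ ≤ 8 := by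
  obtain ⟨h0, h1⟩ := B_bd hρ ν h t κ
  obtain ⟨h2, h3⟩ := B_bd hρ ν h t (κ - θ)
  unfold FF
  refine (norm_add_le _ _).trans ?_
  rw [norm_mul, norm_mul, Complex.norm_conj, Complex.norm_conj]
  have h4 := mul_le_mul h0 h2 (norm_nonneg _) zero_le_two
  have h5 := mul_le_mul h1 h3 (norm_nonneg _) zero_le_two
  linarith

theorem FF_expand {ρ : ℝ} (hρ : ρ ∈ Set.Ioo (0 : ℝ) 1) (ν : ℝ) {α β : ℂ}
    (h : ‖α‖ ^ 2 + ‖β‖ ^ 2 = 1) (t : ℕ) (θ κ : ℝ) :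
    FF ρ ν α β t θ κ = (Real.cos (2 * t * (om ρ (κ - θ) - om ρ κ)) : ℂ)
      + (Real.sin (2 * t * (om ρ (κ - θ) - om ρ κ)) : ℂ) * ip ρ ν α β κ
      + (Real.sin (2 * t * om ρ (κ - θ)) : ℂ) *
        ((starRingEnd ℂ) (B0 ρ ν α β t κ) * (et0 ρ ν α β (κ - θ) - et0 ρ ν α β κ)
        + (starRingEnd ℂ) (B1 ρ ν α β t κ) * (et1 ρ ν α β (κ - θ) - et1 ρ ν α β κ)) := by
  have e1 := norm_conj h
  have e2 := et_norm hρ ν h κ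
  have e3 := et_skew ρ ν α β κ
  have e4 : ip ρ ν α β κ =
    (starRingEnd ℂ) α * et0 ρ ν α β κ + (starRingEnd ℂ) β * et1 ρ ν α β κ := rfl
  rw [mul_sub, Real.cos_sub, Real.sin_sub]
  unfold FF B0 B1
  simp only [map_add, map_mul, Complex.conj_ofReal]
  push_cast
  generalize Complex.cos (2 * t * om ρ κ) = c at *
  generalize Complex.sin (2 * t * om ρ κ) = s at *
  generalize Complex.cos (2 * t * om ρ (κ - θ)) = c' at *
  generalize Complex.sin (2 * t * om ρ (κ - θ)) = s' at *
  linear_combination (c * c') * e1 + (s * s') * e2 + (s * c') * e3 - (c * s') * e4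

theorem FF_lim {ρ : ℝ} (hρ : ρ ∈ Set.Ioo (0 : ℝ) 1) (ν : ℝ) {α β : ℂ}
    (h : ‖α‖ ^ 2 + ‖β‖ ^ 2 = 1) (ξ κ : ℝ) :
    Tendsto (fun t : ℕ => FF ρ ν α β t (ξ / (2 * t)) κ) atTop
      (𝓝 ((Real.cos (ξ * vel ρ κ) : ℂ) - (Real.sin (ξ * vel ρ κ) : ℂ) * ip ρ ν α β κ)) := by
  have hθ : Tendsto (fun t : ℕ => ξ / (2 * (t : ℝ))) atTop (𝓝 0) := by
    apply Tendsto.div_atTop tendsto_const_nhds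
    exact Tendsto.const_mul_atTop two_pos tendsto_natCast_atTop_atTop
  have hκ : Tendsto (fun t : ℕ => κ - ξ / (2 * (t : ℝ))) atTop (𝓝 κ) := by
    simpa using tendsto_const_nhds.sub hθ
  have hang : Tendsto (fun t : ℕ => 2 * (t : ℝ) * (om ρ (κ - ξ / (2 * t)) - om ρ κ)) atTop
      (𝓝 (-(ξ * vel ρ κ))) := by
    have hd : HasDerivAt (fun u : ℝ => om ρ (κ - u * ξ)) (-(ξ * vel ρ κ)) 0 := by
      have h1 : HasDerivAt (fun u : ℝ => κ - u * ξ) (-(1 * ξ)) 0 :=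
        ((hasDerivAt_id (0 : ℝ)).mul_const ξ).const_sub κ
      have h2 : HasDerivAt (om ρ) (vel ρ κ) (κ - 0 * ξ) := by simpa using om_deriv hρ κ
      have h3 := h2.comp (0 : ℝ) h1
      have h4 : vel ρ κ * -(1 * ξ) = -(ξ * vel ρ κ) := by ring
      rw [h4] at h3
      exact h3
    have hs := hd.tendsto_slope_zero
    have hu : Tendsto (fun t : ℕ => (2 * (t : ℝ))⁻¹) atTop (𝓝[≠] 0) := by
      have : Tendsto (fun t : ℕ => (2 * (t : ℝ))) atTop atTop :=
        Tendsto.const_mul_atTop two_pos tendsto_natCast_atTop_atTop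
      exact (tendsto_inv_atTop_nhdsGT_zero.comp this).mono_right
        (nhdsWithin_mono _ (fun x hx => ne_of_gt hx))
    refine (hs.comp hu).congr fun t => ?_
    simp only [Function.comp, inv_inv, zero_add, smul_eq_mul, zero_mul, sub_zero]
    congr 4
    ring
  have hcos := ((Complex.continuous_ofReal.comp Real.continuous_cos).tendsto _).comp hang
  have hsin := ((Complex.continuous_ofReal.comp Real.continuous_sin).tendsto _).comp hang
  have hrem : Tendsto (fun t : ℕ => (Real.sin (2 * t * om ρ (κ - ξ / (2 * t))) : ℂ) *
        ((starRingEnd ℂ) (B0 ρ ν α β t κ) * (et0 ρ ν α β (κ - ξ / (2 * t)) - et0 ρ ν α β κ)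
        + (starRingEnd ℂ) (B1 ρ ν α β t κ) * (et1 ρ ν α β (κ - ξ / (2 * t)) - et1 ρ ν α β κ)))
        atTop (𝓝 0) := by
    have t0 : Tendsto (fun t : ℕ => 2 * ‖et0 ρ ν α β (κ - ξ / (2 * t)) - et0 ρ ν α β κ‖
        + 2 * ‖et1 ρ ν α β (κ - ξ / (2 * t)) - et1 ρ ν α β κ‖) atTop (𝓝 0) := by
      have a0 := (((et0_cont hρ ν α β).tendsto κ).comp hκ).sub_const (et0 ρ ν α β κ)
      have a1 := (((et1_cont hρ ν α β).tendsto κ).comp hκ).sub_const (et1 ρ ν α β κ)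
      simpa using (a0.norm.const_mul 2).add (a1.norm.const_mul 2)
    refine squeeze_zero_norm (fun t => ?_) t0
    obtain ⟨b0, b1⟩ := B_bd hρ ν h t κ
    rw [norm_mul, Complex.norm_real, Real.norm_eq_abs]
    have hs := Real.abs_sin_le_one (2 * t * om ρ (κ - ξ / (2 * t)))
    refine (mul_le_of_le_one_left (norm_nonneg _) hs).trans ((norm_add_le _ _).trans ?_)
    rw [norm_mul, norm_mul, Complex.norm_conj, Complex.norm_conj]
    gcongr
  have := (hcos.add (hsin.mul_const (ip ρ ν α β κ))).add hrem
  simp only [Function.comp, Real.cos_neg, Real.sin_neg] at this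
  simp_rw [FF_expand hρ ν h]
  convert this using 2
  push_cast
  ring

theorem prob_sum {ρ : ℝ} (hρ : ρ ∈ Set.Ioo (0 : ℝ) 1) (ν : ℝ) {α β : ℂ}
    (h : ‖α‖ ^ 2 + ‖β‖ ^ 2 = 1) (t : ℕ) :
    ∑ x ∈ Finset.Icc (-(t : ℤ)) t, cprob ρ ν α β t x = 1 := by
  have h1 := FF_integral hρ ν α β t 0
  have h2 : ∀ κ, FF ρ ν α β t 0 κ = 1 := by
    intro κ
    rw [FF_expand hρ ν h]
    simp
  simp_rw [h2] at h1
  have hp : (2 * π : ℂ) ≠ 0 := by exact_mod_cast Real.two_pi_pos.ne'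
  simp at h1
  exact_mod_cast h1

theorem char_lim {ρ : ℝ} (hρ : ρ ∈ Set.Ioo (0 : ℝ) 1) (ν : ℝ) {α β : ℂ}
    (h : ‖α‖ ^ 2 + ‖β‖ ^ 2 = 1) (ξ : ℝ) :
    Tendsto (fun t : ℕ => ∑ x ∈ Finset.Icc (-(t : ℤ)) t,
          (cprob ρ ν α β t x : ℂ) * Complex.exp (ξ * ((x / t : ℝ) : ℂ) * Complex.I)) atTop
      (𝓝 ((2 * π : ℂ)⁻¹ * ∫ κ in (0 : ℝ)..(2 * π),
        ((Real.cos (ξ * vel ρ κ) : ℂ) - (Real.sin (ξ * vel ρ κ) : ℂ) * ip ρ ν α β κ))) := by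
  have hp : (2 * π : ℂ) ≠ 0 := by exact_mod_cast Real.two_pi_pos.ne'
  have : Tendsto (fun t : ℕ => ∫ κ in (0 : ℝ)..(2 * π), FF ρ ν α β t (ξ / (2 * t)) κ) atTop
      (𝓝 (∫ κ in (0 : ℝ)..(2 * π),
        ((Real.cos (ξ * vel ρ κ) : ℂ) - (Real.sin (ξ * vel ρ κ) : ℂ) * ip ρ ν α β κ))) := by
    apply intervalIntegral.tendsto_integral_filter_of_dominated_convergence (fun _ => 8)
    · exact Eventually.of_forall fun t => (FF_cont hρ ν α β t _).aestronglyMeasurable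
    · exact Eventually.of_forall fun t => Eventually.of_forall fun κ _ => FF_bd hρ ν h t _ κ
    · exact intervalIntegrable_const
    · exact Eventually.of_forall fun κ _ => FF_lim hρ ν h ξ κ
  refine (this.const_mul (2 * π : ℂ)⁻¹).congr fun t => ?_
  rw [FF_integral hρ, inv_mul_cancel_left₀ hp]
  refine Finset.sum_congr rfl fun x _ => ?_
  congr 2
  push_cast
  by_cases ht : (t : ℂ) = 0
  · simp [ht]
  · field_simp

def lam (ρ ν : ℝ) (α β : ℂ) : ℝ := ‖α‖ ^ 2 - ‖β‖ ^ 2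
    - (2 * ρ / rz ρ) * ((α * (starRingEnd ℂ) β).re * Real.cos ν
        + (α * (starRingEnd ℂ) β).im * Real.sin ν)

def imc (ν : ℝ) (α β : ℂ) : ℝ :=
  (α * (starRingEnd ℂ) β).im * Real.cos ν - (α * (starRingEnd ℂ) β).re * Real.sin ν

theorem ip_formula {ρ : ℝ} (hρ : ρ ∈ Set.Ioo (0 : ℝ) 1) (ν : ℝ) (α β : ℂ) (κ : ℝ) :
    ip ρ ν α β κ = Complex.I *
      ((-(lam ρ ν α β * vel ρ κ) + 2 * ρ * imc ν α β * Real.cos κ / sw ρ κ : ℝ) : ℂ) := by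
  have hs : (sw ρ κ : ℂ) ≠ 0 := by exact_mod_cast (sw_pos hρ κ).ne'
  have hr : (rz ρ : ℂ) ≠ 0 := by exact_mod_cast (rz_pos hρ).ne'
  have hna : (starRingEnd ℂ) α * α = ((‖α‖ ^ 2 : ℝ) : ℂ) := by
    rw [← Complex.normSq_eq_conj_mul_self, Complex.normSq_eq_norm_sq]
  have hnb : (starRingEnd ℂ) β * β = ((‖β‖ ^ 2 : ℝ) : ℂ) := by
    rw [← Complex.normSq_eq_conj_mul_self, Complex.normSq_eq_norm_sq]
  have hE : ∀ x : ℝ, Complex.exp (-(Complex.I * x)) = (Real.cos x : ℂ) - Complex.I * (Real.sin x : ℂ) := by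
    intro x
    rw [← mul_neg, mul_comm, Complex.exp_mul_I]; simp; ring
  have hE' : ∀ x : ℝ, Complex.exp ((Complex.I * x)) = (Real.cos x : ℂ) + Complex.I * (Real.sin x : ℂ) := by
    intro x
    rw [mul_comm, Complex.exp_mul_I]; simp; ring
  have hqb : qb ρ ν κ = ρ * ((Real.cos ν : ℂ) - Complex.I * (Real.sin ν : ℂ)) *
      ((Real.cos κ : ℂ) + Complex.I * (Real.sin κ : ℂ)) / sw ρ κ := by
    unfold qb az
    rw [map_mul, ← Complex.exp_conj, hE' κ, ← hE ν]
    simp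
  have hqq : qq ρ ν κ = ρ * ((Real.cos ν : ℂ) + Complex.I * (Real.sin ν : ℂ)) *
      ((Real.cos κ : ℂ) - Complex.I * (Real.sin κ : ℂ)) / sw ρ κ := by
    unfold qq az
    rw [hE κ, ← hE' ν]
  have hg : α * (starRingEnd ℂ) β = ((α * (starRingEnd ℂ) β).re : ℂ)
      + ((α * (starRingEnd ℂ) β).im : ℂ) * Complex.I := (Complex.re_add_im _).symm
  have hg' : (starRingEnd ℂ) α * β = ((α * (starRingEnd ℂ) β).re : ℂ)
      - ((α * (starRingEnd ℂ) β).im : ℂ) * Complex.I := by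
    have := congrArg (starRingEnd ℂ) hg
    simp only [map_mul, map_add, Complex.conj_conj, Complex.conj_ofReal, Complex.conj_I] at this
    rw [this]; simp; ring
  have hv : (vel ρ κ : ℂ) = rz ρ * (Real.sin κ : ℂ) / sw ρ κ := by unfold vel; push_cast; rfl
  have hI := Complex.I_sq
  have e : ip ρ ν α β κ = -(Complex.I * vel ρ κ) * ((starRingEnd ℂ) α * α - (starRingEnd ℂ) β * β)
      - qq ρ ν κ * ((starRingEnd ℂ) α * β) + qb ρ ν κ * (α * (starRingEnd ℂ) β) := by
    unfold ip et0 et1; ring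
  rw [e, hna, hnb, hg, hg', hqb, hqq]
  simp only [Complex.ofReal_add, Complex.ofReal_neg, Complex.ofReal_mul, Complex.ofReal_div, hv,
    lam, imc, Complex.ofReal_sub, Complex.ofReal_ofNat]
  generalize (α * (starRingEnd ℂ) β).re = x at *
  generalize (α * (starRingEnd ℂ) β).im = y at *
  generalize (Real.sin κ : ℂ) = s at *
  generalize (Real.cos κ : ℂ) = c at *
  generalize (Real.sin ν : ℂ) = s' at *
  generalize (Real.cos ν : ℂ) = c' at *
  field_simp
  ring_nf
  simp only [show Complex.I ^ 3 = Complex.I ^ 2 * Complex.I by ring, hI]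
  ring

theorem lam_bd {ρ : ℝ} (hρ : ρ ∈ Set.Ioo (0 : ℝ) 1) (ν : ℝ) {α β : ℂ}
    (h : ‖α‖ ^ 2 + ‖β‖ ^ 2 = 1) : |lam ρ ν α β * rz ρ| ≤ 1 := by
  have h1 := ip_formula hρ ν α β (π / 2)
  have hs : sw ρ (π / 2) = 1 := by simp [sw]
  have hv : vel ρ (π / 2) = rz ρ := by simp [vel, hs]
  rw [hv] at h1
  have h2 : ‖ip ρ ν α β (π / 2)‖ = |lam ρ ν α β * rz ρ| := by
    rw [h1, norm_mul, Complex.norm_I, one_mul, Complex.norm_real, Real.norm_eq_abs]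
    simp
  rw [← h2]
  have h3 := et_norm' hρ ν h (π / 2)
  unfold ip
  refine (norm_add_le _ _).trans ?_
  rw [norm_mul, norm_mul, Complex.norm_conj, Complex.norm_conj]
  nlinarith [sq_nonneg (‖α‖ - ‖et0 ρ ν α β (π / 2)‖), sq_nonneg (‖β‖ - ‖et1 ρ ν α β (π / 2)‖)]

theorem Delta_eq (ρ ν : ℝ) (α β : ℂ) (y : ℝ) : Delta ρ ν α β y = 1 + lam ρ ν α β * y := rfl

theorem densV_nonneg {ρ : ℝ} (hρ : ρ ∈ Set.Ioo (0 : ℝ) 1) (ν : ℝ) {α β : ℂ}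
    (h : ‖α‖ ^ 2 + ‖β‖ ^ 2 = 1) (y : ℝ) : 0 ≤ densV ρ ν α β y := by
  unfold densV
  split_ifs with hy
  · have hr := rz_pos hρ
    have hr1 := rz_lt hρ
    have hl := lam_bd hρ ν h
    have hD : 0 ≤ Delta ρ ν α β y := by
      rw [Delta_eq]
      have h1 : |lam ρ ν α β * y| ≤ |lam ρ ν α β * rz ρ| := by
        rw [abs_mul, abs_mul, abs_of_pos hr]
        have := abs_le.2 ⟨hy.1.le, hy.2.le⟩
        gcongr
      have := (abs_le.1 (h1.trans hl)).1
      linarith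
    have h2 : 0 ≤ 1 - y ^ 2 := by nlinarith [hy.1, hy.2]
    have := hρ.1
    positivity
  · rfl

theorem vel_neg (ρ κ : ℝ) : vel ρ (-κ) = - vel ρ κ := by
  simp [vel, sw, neg_div]

theorem vel_pi_sub (ρ κ : ℝ) : vel ρ (π - κ) = vel ρ κ := by
  simp [vel, sw, Real.cos_pi_sub]

theorem sym_int {ρ : ℝ} (hρ : ρ ∈ Set.Ioo (0 : ℝ) 1) (ν : ℝ) (α β : ℂ) (ξ : ℝ) :
    ∫ κ in (0 : ℝ)..(2 * π),
        ((Real.cos (ξ * vel ρ κ) : ℂ) - (Real.sin (ξ * vel ρ κ) : ℂ) * ip ρ ν α β κ)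
      = 2 * ∫ κ in (-(π / 2))..(π / 2), ((1 + lam ρ ν α β * vel ρ κ : ℝ) : ℂ) *
          Complex.exp (ξ * (vel ρ κ : ℂ) * Complex.I) := by
  have hvc := vel_cont hρ
  have hsc := sw_cont ρ
  set f : ℝ → ℂ := fun κ =>
    ((Real.cos (ξ * vel ρ κ) : ℂ) - (Real.sin (ξ * vel ρ κ) : ℂ) * ip ρ ν α β κ) with hf
  have hipc : Continuous (ip ρ ν α β) := by
    unfold ip
    have := et0_cont hρ ν α β
    have := et1_cont hρ ν α β
    fun_prop
  have hfc : Continuous f := by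
    rw [hf]; fun_prop
  have hper : Function.Periodic f (2 * π) := by
    intro κ
    have hv : vel ρ (κ + 2 * π) = vel ρ κ := by simp [vel, sw]
    have hs : sw ρ (κ + 2 * π) = sw ρ κ := by simp [sw]
    simp only [hf, ip_formula hρ, hv, hs, Real.cos_add_two_pi]
  have e1 : ∫ κ in (0 : ℝ)..(2 * π), f κ = ∫ κ in (-(π / 2))..(-(π / 2) + 2 * π), f κ := by
    have := hper.intervalIntegral_add_eq 0 (-(π / 2))
    rwa [zero_add] at this
  have e2 : ∫ κ in (-(π / 2))..(-(π / 2) + 2 * π), f κ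
      = (∫ κ in (-(π / 2))..(π / 2), f κ) + ∫ κ in (π / 2)..(-(π / 2) + 2 * π), f κ :=
    (intervalIntegral.integral_add_adjacent_intervals (hfc.intervalIntegrable _ _)
      (hfc.intervalIntegrable _ _)).symm
  have e3 : ∫ κ in (-(π / 2))..(π / 2), f (π - κ) = ∫ κ in (π / 2)..(-(π / 2) + 2 * π), f κ := by
    rw [intervalIntegral.integral_comp_sub_left]
    congr 1 <;> ring
  have e4 : ∀ κ, f κ + f (π - κ) = 2 * ((Real.cos (ξ * vel ρ κ) : ℂ)
      + Complex.I * ((lam ρ ν α β * vel ρ κ : ℝ) : ℂ) * (Real.sin (ξ * vel ρ κ) : ℂ)) := by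
    intro κ
    have hs : sw ρ (π - κ) = sw ρ κ := by simp [sw, Real.cos_pi_sub]
    simp only [hf, ip_formula hρ, vel_pi_sub, hs, Real.cos_pi_sub]
    push_cast
    ring
  have hE : ∀ κ, ((1 + lam ρ ν α β * vel ρ κ : ℝ) : ℂ) *
          Complex.exp (ξ * (vel ρ κ : ℂ) * Complex.I) = ((Real.cos (ξ * vel ρ κ) : ℂ)
      + Complex.I * ((lam ρ ν α β * vel ρ κ : ℝ) : ℂ) * (Real.sin (ξ * vel ρ κ) : ℂ))
      + (((lam ρ ν α β * vel ρ κ : ℝ) : ℂ) * (Real.cos (ξ * vel ρ κ) : ℂ)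
        + Complex.I * (Real.sin (ξ * vel ρ κ) : ℂ)) := by
    intro κ
    rw [Complex.exp_mul_I]
    push_cast
    ring
  have hodd : ∫ κ in (-(π / 2))..(π / 2),
      (((lam ρ ν α β * vel ρ κ : ℝ) : ℂ) * (Real.cos (ξ * vel ρ κ) : ℂ)
        + Complex.I * (Real.sin (ξ * vel ρ κ) : ℂ)) = 0 := by
    set g : ℝ → ℂ := fun κ => (((lam ρ ν α β * vel ρ κ : ℝ) : ℂ) * (Real.cos (ξ * vel ρ κ) : ℂ)
        + Complex.I * (Real.sin (ξ * vel ρ κ) : ℂ)) with hg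
    have h1 : ∫ κ in (-(π / 2))..(π / 2), g (-κ) = ∫ κ in (-(π / 2))..(π / 2), g κ := by
      rw [intervalIntegral.integral_comp_neg, neg_neg]
    have h2 : ∀ κ, g (-κ) = - g κ := by
      intro κ
      simp only [hg, vel_neg, mul_neg, Real.cos_neg, Real.sin_neg]
      push_cast
      ring
    simp_rw [h2, intervalIntegral.integral_neg] at h1
    exact self_eq_neg.1 h1.symm
  have hfc2 : Continuous (fun κ => f (π - κ)) := hfc.comp (by fun_prop)
  rw [e1, e2, ← e3, ← intervalIntegral.integral_add (hfc.intervalIntegrable _ _)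
    (hfc2.intervalIntegrable _ _)]
  simp_rw [e4, hE]
  have hadd : ∫ κ in (-(π / 2))..(π / 2), 
      (((Real.cos (ξ * vel ρ κ) : ℂ) + Complex.I * ((lam ρ ν α β * vel ρ κ : ℝ) : ℂ) * (Real.sin (ξ * vel ρ κ) : ℂ))
        + (((lam ρ ν α β * vel ρ κ : ℝ) : ℂ) * (Real.cos (ξ * vel ρ κ) : ℂ) + Complex.I * (Real.sin (ξ * vel ρ κ) : ℂ)))
      = (∫ κ in (-(π / 2))..(π / 2), 
          ((Real.cos (ξ * vel ρ κ) : ℂ) + Complex.I * ((lam ρ ν α β * vel ρ κ : ℝ) : ℂ) * (Real.sin (ξ * vel ρ κ) : ℂ)))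
        + ∫ κ in (-(π / 2))..(π / 2), 
          (((lam ρ ν α β * vel ρ κ : ℝ) : ℂ) * (Real.cos (ξ * vel ρ κ) : ℂ) + Complex.I * (Real.sin (ξ * vel ρ κ) : ℂ)) :=
    intervalIntegral.integral_add (by apply Continuous.intervalIntegrable; fun_prop)
      (by apply Continuous.intervalIntegrable; fun_prop)
  rw [intervalIntegral.integral_const_mul, hadd, hodd, add_zero]

theorem vel_deriv {ρ : ℝ} (hρ : ρ ∈ Set.Ioo (0 : ℝ) 1) (κ : ℝ) :
    HasDerivAt (vel ρ) (ρ ^ 2 * rz ρ * Real.cos κ / sw ρ κ ^ 3) κ := by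
  have hp := sw_pos hρ κ
  have h2 := sw_sq hρ κ
  have hsq : HasDerivAt (fun κ => 1 - (rz ρ) ^ 2 * Real.cos κ ^ 2)
      (2 * rz ρ ^ 2 * Real.cos κ * Real.sin κ) κ := by
    have := (((Real.hasDerivAt_cos κ).pow 2).const_mul ((rz ρ) ^ 2)).const_sub 1
    refine this.congr_deriv ?_
    simp
    ring
  have hsw : HasDerivAt (sw ρ) (2 * rz ρ ^ 2 * Real.cos κ * Real.sin κ / (2 * sw ρ κ)) κ :=
    hsq.sqrt (sw_arg_pos hρ κ).ne'
  have hv := ((Real.hasDerivAt_sin κ).const_mul (rz ρ)).div hsw hp.ne'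
  refine hv.congr_deriv ?_
  have h3 := h2.trans (sw_arg hρ κ)
  field_simp
  linear_combination (rz ρ * Real.cos κ) * h3

theorem vel_strictMono {ρ : ℝ} (hρ : ρ ∈ Set.Ioo (0 : ℝ) 1) :
    StrictMonoOn (vel ρ) (Set.Icc (-(π / 2)) (π / 2)) := by
  apply strictMonoOn_of_deriv_pos (convex_Icc _ _) (vel_cont hρ).continuousOn
  intro x hx
  rw [interior_Icc] at hx
  rw [(vel_deriv hρ x).deriv]
  have := Real.cos_pos_of_mem_Ioo hx
  have := hρ.1
  have := rz_pos hρ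
  have := sw_pos hρ x
  positivity

theorem vel_image {ρ : ℝ} (hρ : ρ ∈ Set.Ioo (0 : ℝ) 1) :
    Set.image (vel ρ) (Set.Ioo (-(π / 2)) (π / 2)) = Set.Ioo (-(rz ρ)) (rz ρ) := by
  have hs : sw ρ (π / 2) = 1 := by simp [sw]
  have hv : vel ρ (π / 2) = rz ρ := by simp [vel, hs]
  have hv' : vel ρ (-(π / 2)) = - rz ρ := by rw [vel_neg, hv]
  have hpi := Real.pi_pos
  apply Set.Subset.antisymm
  · rintro _ ⟨κ, hκ, rfl⟩
    have h1 := vel_strictMono hρ (Set.left_mem_Icc.2 (by linarith)) (Set.Ioo_subset_Icc_self hκ) hκ.1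
    have h2 := vel_strictMono hρ (Set.Ioo_subset_Icc_self hκ) (Set.right_mem_Icc.2 (by linarith)) hκ.2
    rw [hv'] at h1
    rw [hv] at h2
    exact ⟨h1, h2⟩
  · have := intermediate_value_Ioo (by linarith : -(π / 2) ≤ π / 2) (vel_cont hρ).continuousOn
    rwa [hv, hv'] at this

theorem dens_jac {ρ : ℝ} (hρ : ρ ∈ Set.Ioo (0 : ℝ) 1) (ν : ℝ) (α β : ℂ) {κ : ℝ}
    (hκ : κ ∈ Set.Ioo (-(π / 2)) (π / 2)) :
    |ρ ^ 2 * rz ρ * Real.cos κ / sw ρ κ ^ 3| * densV ρ ν α β (vel ρ κ)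
      = π⁻¹ * (1 + lam ρ ν α β * vel ρ κ) := by
  have hc := Real.cos_pos_of_mem_Ioo hκ
  have hρ0 := hρ.1
  have hr := rz_pos hρ
  have hs := sw_pos hρ κ
  have hmem : vel ρ κ ∈ Set.Ioo (-(rz ρ)) (rz ρ) := by
    rw [← vel_image hρ]; exact ⟨κ, hκ, rfl⟩
  have h2 := sw_sq hρ κ
  have h3 := h2.trans (sw_arg hρ κ)
  have hr2 := rz_sq hρ
  have hsc := Real.sin_sq_add_cos_sq κ
  have a1 : 1 - vel ρ κ ^ 2 = ρ ^ 2 / sw ρ κ ^ 2 := by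
    unfold vel
    field_simp
    linear_combination h3
  have a2 : rz ρ ^ 2 - vel ρ κ ^ 2 = (rz ρ * ρ * Real.cos κ / sw ρ κ) ^ 2 := by
    unfold vel
    field_simp
    linear_combination h2 - Real.cos κ ^ 2 * hr2 - hsc
  have hpi := Real.pi_pos
  rw [abs_of_pos (by positivity)]
  unfold densV
  rw [if_pos hmem, a1, a2, Real.sqrt_sq (by positivity), Delta_eq]
  field_simp

theorem dens_int {ρ : ℝ} (hρ : ρ ∈ Set.Ioo (0 : ℝ) 1) (ν : ℝ) (α β : ℂ) (G : ℝ → ℂ) :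
    ∫ y, (densV ρ ν α β y) • G y
      = ∫ κ in Set.Ioo (-(π / 2)) (π / 2), (π⁻¹ * (1 + lam ρ ν α β * vel ρ κ)) • G (vel ρ κ) := by
  rw [← setIntegral_eq_integral_of_forall_compl_eq_zero (s := Set.Ioo (-(rz ρ)) (rz ρ))]
  · rw [← vel_image hρ, integral_image_eq_integral_abs_deriv_smul measurableSet_Ioo
      (fun κ _ => (vel_deriv hρ κ).hasDerivWithinAt)
      ((vel_strictMono hρ).injOn.mono Set.Ioo_subset_Icc_self)]
    refine setIntegral_congr_fun measurableSet_Ioo fun κ hκ => ?_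
    rw [← mul_smul, dens_jac hρ ν α β hκ]
  · intro y hy
    simp [densV, hy]

theorem dens_integrable {ρ : ℝ} (hρ : ρ ∈ Set.Ioo (0 : ℝ) 1) (ν : ℝ) (α β : ℂ) :
    Integrable (densV ρ ν α β) := by
  have : IntegrableOn (densV ρ ν α β) (Set.Ioo (-(rz ρ)) (rz ρ)) := by
    rw [← vel_image hρ, integrableOn_image_iff_integrableOn_abs_deriv_smul measurableSet_Ioo
      (fun κ _ => (vel_deriv hρ κ).hasDerivWithinAt)
      ((vel_strictMono hρ).injOn.mono Set.Ioo_subset_Icc_self)]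
    have hc : Continuous (fun κ => π⁻¹ * (1 + lam ρ ν α β * vel ρ κ)) := by
      have := vel_cont hρ
      fun_prop
    refine IntegrableOn.congr_fun (f := fun κ => π⁻¹ * (1 + lam ρ ν α β * vel ρ κ)) ?_ ?_
      measurableSet_Ioo
    · exact (hc.integrableOn_Icc).mono_set Set.Ioo_subset_Icc_self
    · intro κ hκ
      simp only [smul_eq_mul]
      rw [dens_jac hρ ν α β hκ]
  refine (integrableOn_iff_integrable_of_support_subset ?_).1 this
  intro y hy
  by_contra hn
  exact hy (by simp [densV, hn])

theorem dens_char {ρ : ℝ} (hρ : ρ ∈ Set.Ioo (0 : ℝ) 1) (ν : ℝ) (α β : ℂ) (ξ : ℝ) :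
    ∫ y, (densV ρ ν α β y) • Complex.exp (ξ * (y : ℂ) * Complex.I)
      = (2 * π : ℂ)⁻¹ * ∫ κ in (0 : ℝ)..(2 * π),
        ((Real.cos (ξ * vel ρ κ) : ℂ) - (Real.sin (ξ * vel ρ κ) : ℂ) * ip ρ ν α β κ) := by
  have hpi := Real.pi_pos
  have hp : (π : ℂ) ≠ 0 := by exact_mod_cast hpi.ne'
  rw [dens_int hρ, sym_int hρ, intervalIntegral.integral_of_le (by linarith),
    ← integral_Ioc_eq_integral_Ioo, ← mul_assoc, show (2 * π : ℂ)⁻¹ * 2 = (π : ℂ)⁻¹ by field_simp,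
    ← integral_const_mul]
  congr 1
  ext κ
  rw [Complex.real_smul]
  push_cast
  ring

theorem dens_total {ρ : ℝ} (hρ : ρ ∈ Set.Ioo (0 : ℝ) 1) (ν : ℝ) (α β : ℂ) :
    ∫ y, densV ρ ν α β y = 1 := by
  have h := dens_char hρ ν α β 0
  have hp : (π : ℂ) ≠ 0 := by exact_mod_cast Real.pi_pos.ne'
  simp at h
  have h2 : ((∫ y, densV ρ ν α β y : ℝ) : ℂ) = 1 := by
    rw [← integral_complex_ofReal, h]; field_simp
  exact_mod_cast h2

/-- the law of `X_t / t`. -/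
def lawt (ρ ν : ℝ) (α β : ℂ) (t : ℕ) : Measure ℝ :=
  ∑ x ∈ Finset.Icc (-(t : ℤ)) t,
    ENNReal.ofReal (cprob ρ ν α β t x) • Measure.dirac ((x : ℝ) / t)

theorem cprob_nonneg (ρ ν : ℝ) (α β : ℂ) (t : ℕ) (x : ℤ) : 0 ≤ cprob ρ ν α β t x := by
  unfold cprob; positivity

theorem lawt_prob {ρ : ℝ} (hρ : ρ ∈ Set.Ioo (0 : ℝ) 1) (ν : ℝ) {α β : ℂ}
    (h : ‖α‖ ^ 2 + ‖β‖ ^ 2 = 1) (t : ℕ) : IsProbabilityMeasure (lawt ρ ν α β t) := by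
  constructor
  unfold lawt
  rw [Measure.finsetSum_apply]
  simp only [Measure.smul_apply, measure_univ, smul_eq_mul, mul_one]
  rw [← ENNReal.ofReal_sum_of_nonneg (fun x _ => cprob_nonneg ρ ν α β t x), prob_sum hρ ν h]
  simp

theorem lawt_char (ρ ν : ℝ) (α β : ℂ) (t : ℕ) (ξ : ℝ) :
    charFun (lawt ρ ν α β t) ξ = ∑ x ∈ Finset.Icc (-(t : ℤ)) t,
          (cprob ρ ν α β t x : ℂ) * Complex.exp (ξ * ((x / t : ℝ) : ℂ) * Complex.I) := by
  rw [charFun_apply_real]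
  unfold lawt
  rw [integral_finsetSum_measure]
  · refine Finset.sum_congr rfl fun x _ => ?_
    rw [integral_smul_measure, integral_dirac,
      ENNReal.toReal_ofReal (cprob_nonneg ρ ν α β t x), Complex.real_smul]
  · intro x _
    exact (integrable_dirac (by simp [enorm_lt_top])).smul_measure ENNReal.ofReal_ne_top

theorem lawt_Iic (ρ ν : ℝ) (α β : ℂ) {t : ℕ} (ht : 0 < t) (x : ℝ) :
    (lawt ρ ν α β t (Set.Iic x)).toReal
      = ∑' y : ℤ, if (y : ℝ) ≤ x * t then cprob ρ ν α β t y else 0 := by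
  have ht' : (0 : ℝ) < t := by exact_mod_cast ht
  rw [tsum_eq_sum (s := Finset.Icc (-(t : ℤ)) t)]
  · unfold lawt
    rw [Measure.finsetSum_apply, ENNReal.toReal_sum]
    · refine Finset.sum_congr rfl fun y _ => ?_
      rw [Measure.smul_apply, Measure.dirac_apply' _ measurableSet_Iic]
      by_cases hy : (y : ℝ) ≤ x * t
      · have : (y : ℝ) / t ∈ Set.Iic x := (div_le_iff₀ ht').2 hy
        simp [hy, this, cprob_nonneg, -Set.mem_Iic]
      · have : (y : ℝ) / t ∉ Set.Iic x := fun hh => hy ((div_le_iff₀ ht').1 hh)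
        simp [hy, this, -Set.mem_Iic]
    · intro y _
      rw [Measure.smul_apply]
      exact ENNReal.mul_ne_top ENNReal.ofReal_ne_top (measure_ne_top _ _)
  · intro y hy
    simp [cprob, cwalk_supp ρ ν α β t y hy]

/-- the limit law. -/
def lawlim (ρ ν : ℝ) (α β : ℂ) : Measure ℝ :=
  volume.withDensity (fun y => ENNReal.ofReal (densV ρ ν α β y))

theorem lawlim_prob {ρ : ℝ} (hρ : ρ ∈ Set.Ioo (0 : ℝ) 1) (ν : ℝ) {α β : ℂ}
    (h : ‖α‖ ^ 2 + ‖β‖ ^ 2 = 1) : IsProbabilityMeasure (lawlim ρ ν α β) := by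
  constructor
  unfold lawlim
  rw [withDensity_apply _ MeasurableSet.univ, Measure.restrict_univ,
    ← ofReal_integral_eq_lintegral_ofReal (dens_integrable hρ ν α β)
      (Eventually.of_forall (densV_nonneg hρ ν h)), dens_total hρ]
  simp

theorem lawlim_Iic {ρ : ℝ} (hρ : ρ ∈ Set.Ioo (0 : ℝ) 1) (ν : ℝ) {α β : ℂ}
    (h : ‖α‖ ^ 2 + ‖β‖ ^ 2 = 1) (x : ℝ) :
    (lawlim ρ ν α β (Set.Iic x)).toReal = ∫ y in Set.Iic x, densV ρ ν α β y := by
  unfold lawlim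
  rw [withDensity_apply _ measurableSet_Iic,
    ← ofReal_integral_eq_lintegral_ofReal (dens_integrable hρ ν α β).integrableOn
      (Eventually.of_forall (densV_nonneg hρ ν h)), ENNReal.toReal_ofReal]
  exact integral_nonneg (densV_nonneg hρ ν h)

theorem lawlim_char {ρ : ℝ} (hρ : ρ ∈ Set.Ioo (0 : ℝ) 1) (ν : ℝ) {α β : ℂ}
    (h : ‖α‖ ^ 2 + ‖β‖ ^ 2 = 1) (ξ : ℝ) :
    charFun (lawlim ρ ν α β) ξ = ∫ y, (densV ρ ν α β y) • Complex.exp (ξ * (y : ℂ) * Complex.I) := by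
  rw [charFun_apply_real]
  unfold lawlim
  rw [integral_withDensity_eq_integral_toReal_smul₀]
  · congr 1
    ext y
    rw [ENNReal.toReal_ofReal (densV_nonneg hρ ν h y)]
  · exact (dens_integrable hρ ν α β).aestronglyMeasurable.aemeasurable.ennreal_ofReal
  · exact Eventually.of_forall fun y => ENNReal.ofReal_lt_top

/-- the walk driven by `V` alone converges in distribution to the coined-walk
density `g`. -/
theorem stmt2 (ρ ν : ℝ) (hρ : ρ ∈ Set.Ioo (0 : ℝ) 1)
    (α β : ℂ) (hαβ : ‖α‖ ^ 2 + ‖β‖ ^ 2 = 1) (x : ℝ) :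
    Tendsto (fun t : ℕ => ∑' y : ℤ, if (y : ℝ) ≤ x * t then cprob ρ ν α β t y else 0)
      atTop (𝓝 (∫ y in Set.Iic x, densV ρ ν α β y)) := by
  let μs : ℕ → ProbabilityMeasure ℝ := fun t => ⟨lawt ρ ν α β t, lawt_prob hρ ν hαβ t⟩
  let μ : ProbabilityMeasure ℝ := ⟨lawlim ρ ν α β, lawlim_prob hρ ν hαβ⟩
  have hlim : Tendsto μs atTop (𝓝 μ) := by
    refine ProbabilityMeasure.tendsto_iff_tendsto_charFun.2 fun ξ => ?_
    change Tendsto (fun t => charFun (lawt ρ ν α β t) ξ) atTop (𝓝 (charFun (lawlim ρ ν α β) ξ))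
    rw [lawlim_char hρ ν hαβ, dens_char hρ]
    simp_rw [lawt_char]
    exact char_lim hρ ν hαβ ξ
  have hnull : (μ : Measure ℝ) (frontier (Set.Iic x)) = 0 := by
    rw [frontier_Iic]
    exact withDensity_absolutelyContinuous _ _ (by simp)
  have h1 := ProbabilityMeasure.tendsto_measure_of_null_frontier_of_tendsto' hlim hnull
  have h2 := (ENNReal.tendsto_toReal (measure_ne_top _ _)).comp h1
  change Tendsto _ atTop (𝓝 (lawlim ρ ν α β (Set.Iic x)).toReal) at h2
  rw [lawlim_Iic hρ ν hαβ] at h2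
  refine h2.congr' ?_
  filter_upwards [eventually_gt_atTop 0] with t ht
  exact lawt_Iic ρ ν α β ht x

end
end

section
/- Fix ρ ∈ (0,1) and ν ∈ ℝ. Then (1+ρρ₀)² − ρ²ρ₀²sin²ν ≥ 0 and (1−ρρ₀)² − ρ²ρ₀²sin²ν ≥ 0, so that h* = (1/2){√((1+ρρ₀)² − ρ²ρ₀²sin²ν) − √((1−ρρ₀)² − ρ²ρ₀²sin²ν)} is a well-defined real number, and moreover 0 < h* < 1. -/
open Real

noncomputable section

/-- `h* = (1/2){√((1+ρρ₀)² − ρ²ρ₀²sin²ν) − √((1−ρρ₀)² − ρ²ρ₀²sin²ν)}`. -/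
def hstar (ρ ν : ℝ) : ℝ :=
  (1 / 2) * (Real.sqrt ((1 + ρ * rz ρ) ^ 2 - ρ ^ 2 * (rz ρ) ^ 2 * (Real.sin ν) ^ 2)
    - Real.sqrt ((1 - ρ * rz ρ) ^ 2 - ρ ^ 2 * (rz ρ) ^ 2 * (Real.sin ν) ^ 2))

/-- the two radicands defining `h*` are nonnegative, and `0 < h* < 1`. -/
theorem stmt9 (ρ ν : ℝ) (hρ : ρ ∈ Set.Ioo (0 : ℝ) 1) :
    0 ≤ (1 + ρ * rz ρ) ^ 2 - ρ ^ 2 * (rz ρ) ^ 2 * (Real.sin ν) ^ 2 ∧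
    0 ≤ (1 - ρ * rz ρ) ^ 2 - ρ ^ 2 * (rz ρ) ^ 2 * (Real.sin ν) ^ 2 ∧
    0 < hstar ρ ν ∧ hstar ρ ν < 1 := by
  have h0 : 0 < 1 - ρ ^ 2 := by nlinarith [hρ.1, hρ.2]
  have hr : 0 < rz ρ := Real.sqrt_pos.mpr h0
  have hr2 : rz ρ ^ 2 = 1 - ρ ^ 2 := Real.sq_sqrt h0.le
  have hs1 : Real.sin ν ^ 2 ≤ 1 := Real.sin_sq_le_one ν
  have hs0 : 0 ≤ Real.sin ν ^ 2 := sq_nonneg _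
  unfold hstar
  have hk : 0 < ρ * rz ρ := mul_pos hρ.1 hr
  have hk2 : ρ * rz ρ ≤ 1 / 2 := by nlinarith [sq_nonneg (ρ - rz ρ)]
  rw [← mul_pow]
  generalize ρ * rz ρ = k at hk hk2 ⊢
  generalize Real.sin ν ^ 2 = s at hs0 hs1 ⊢
  have hks : k ^ 2 * s ≤ k ^ 2 := mul_le_of_le_one_right (sq_nonneg k) hs1
  have hks0 : 0 ≤ k ^ 2 * s := by positivity
  have hB : 0 ≤ (1 - k) ^ 2 - k ^ 2 * s := by nlinarith
  have hAB : (1 - k) ^ 2 - k ^ 2 * s < (1 + k) ^ 2 - k ^ 2 * s := by nlinarith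
  have h1 := Real.sqrt_lt_sqrt hB hAB
  have h2 : Real.sqrt ((1 + k) ^ 2 - k ^ 2 * s) ≤ 3 / 2 := by
    apply Real.sqrt_le_iff.mpr
    constructor
    · norm_num
    · nlinarith
  have h3 := Real.sqrt_nonneg ((1 - k) ^ 2 - k ^ 2 * s)
  refine ⟨by linarith, hB, by linarith, by linarith⟩

end
end

section
/- Fix ρ ∈ (0,1) and ν ∈ ℝ, and assume (ρ, ν) ≠ (1/√2, π/2 + nπ) for every integer n. Define h(k) = ρρ₀ cos k / √(1 − ρ²ρ₀²(sin k − sin ν)²). Then |h(k)| ≤ h* for every k ∈ ℝ, and there exists k* ∈ ℝ with h(k*) = h*; in other words, the range of h is exactly the interval [−h*, h*]. -/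
open Real

noncomputable section

/-- `h(k) = ρρ₀ cos k / √(1 − ρ²ρ₀²(sin k − sin ν)²)`. -/
def hfun (ρ ν k : ℝ) : ℝ :=
  ρ * rz ρ * Real.cos k / Real.sqrt (1 - ρ ^ 2 * (rz ρ) ^ 2 * (Real.sin k - Real.sin ν) ^ 2)

theorem aux_alg (a s H x : ℝ) (Q : H ^ 2 - (1 + a ^ 2 - a ^ 2 * s ^ 2) * H + a ^ 2 = 0) :
    (1 - H) * (H * (1 - a ^ 2 * (x - s) ^ 2) - a ^ 2 * (1 - x ^ 2))
      = (a * ((1 - H) * x + H * s)) ^ 2 := by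
  linear_combination (-1) * Q

theorem aux_pos (a s x : ℝ) (ha : 0 < a) (ha2 : a ≤ 1 / 2) (hs : s ^ 2 ≤ 1) (hx : x ^ 2 ≤ 1)
    (hne : a < 1 / 2 ∨ s ^ 2 < 1) : 0 < 1 - a ^ 2 * (x - s) ^ 2 := by
  have e : (x - s) ^ 2 ≤ 2 * x ^ 2 + 2 * s ^ 2 := by nlinarith [sq_nonneg (x + s)]
  rcases hne with h | h
  · have : a ^ 2 < 1 / 4 := by nlinarith
    nlinarith [sq_nonneg (x - s)]
  · have : a ^ 2 ≤ 1 / 4 := by nlinarith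
    nlinarith [sq_nonneg (x - s)]

set_option maxHeartbeats 1000000 in
/-- `|h(k)| ≤ h*` for all `k`, the value `h*` is attained, and the range
of `h` is exactly `[−h*, h*]`. -/
theorem stmt10 (ρ ν : ℝ) (hρ : ρ ∈ Set.Ioo (0 : ℝ) 1)
    (hexc : ∀ n : ℤ, ¬(ρ = 1 / Real.sqrt 2 ∧ ν = π / 2 + n * π)) :
    (∀ k : ℝ, |hfun ρ ν k| ≤ hstar ρ ν) ∧ (∃ kstar : ℝ, hfun ρ ν kstar = hstar ρ ν) ∧
      Set.range (hfun ρ ν) = Set.Icc (-(hstar ρ ν)) (hstar ρ ν) := by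
  obtain ⟨h0, h1⟩ := hρ
  have hr2 : (rz ρ) ^ 2 = 1 - ρ ^ 2 := Real.sq_sqrt (by nlinarith)
  have hr : 0 < rz ρ := Real.sqrt_pos.mpr (by nlinarith)
  have hs1 : (Real.sin ν) ^ 2 ≤ 1 := Real.sin_sq_le_one ν
  have hne : ρ * rz ρ < 1 / 2 ∨ (Real.sin ν) ^ 2 < 1 := by
    by_contra! hcon
    obtain ⟨c1, c2⟩ := hcon
    have e1 : ρ ^ 2 = 1 / 2 := by
      have : ρ = rz ρ := by
        have : (ρ - rz ρ) ^ 2 ≤ 0 := by nlinarith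
        nlinarith [pow_eq_zero_iff (two_ne_zero) |>.mp (le_antisymm this (sq_nonneg _))]
      rw [← this] at hr2
      linarith
    have e2 : Real.cos ν = 0 := by
      have := Real.sin_sq_add_cos_sq ν
      have : Real.cos ν ^ 2 = 0 := by nlinarith [sq_nonneg (Real.cos ν)]
      exact pow_eq_zero_iff (two_ne_zero) |>.mp this
    obtain ⟨n, hn⟩ := Real.cos_eq_zero_iff.mp e2
    refine hexc n ⟨?_, by rw [hn]; ring⟩
    rw [← Real.sqrt_sq h0.le, e1, Real.sqrt_div zero_le_one, Real.sqrt_one]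
  have ha : 0 < ρ * rz ρ := mul_pos h0 hr
  have ha2 : ρ * rz ρ ≤ 1 / 2 := by nlinarith [sq_nonneg (ρ - rz ρ)]
  have hf : ∀ k, hfun ρ ν k = (ρ * rz ρ) * Real.cos k /
      Real.sqrt (1 - (ρ * rz ρ) ^ 2 * (Real.sin k - Real.sin ν) ^ 2) := by
    intro k; simp only [hfun, mul_pow]
  have hh : hstar ρ ν = (1 / 2) *
      (Real.sqrt ((1 + ρ * rz ρ) ^ 2 - (ρ * rz ρ) ^ 2 * (Real.sin ν) ^ 2)
      - Real.sqrt ((1 - ρ * rz ρ) ^ 2 - (ρ * rz ρ) ^ 2 * (Real.sin ν) ^ 2)) := by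
    simp only [hstar, mul_pow]
  generalize ρ * rz ρ = a at *
  generalize hstar ρ ν = h at *
  generalize Real.sin ν = s at *
  have hB : 0 ≤ (1 - a) ^ 2 - a ^ 2 * s ^ 2 := by
    nlinarith [mul_nonneg (sq_nonneg a) (sub_nonneg.mpr hs1)]
  have hA : 0 ≤ (1 + a) ^ 2 - a ^ 2 * s ^ 2 := by nlinarith
  have hp2 := Real.sq_sqrt hA
  have hq2 := Real.sq_sqrt hB
  have hq0 := Real.sqrt_nonneg ((1 - a) ^ 2 - a ^ 2 * s ^ 2)
  have hpq : Real.sqrt ((1 - a) ^ 2 - a ^ 2 * s ^ 2) ≤ Real.sqrt ((1 + a) ^ 2 - a ^ 2 * s ^ 2) :=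
    Real.sqrt_le_sqrt (by nlinarith)
  generalize Real.sqrt ((1 - a) ^ 2 - a ^ 2 * s ^ 2) = q at *
  generalize Real.sqrt ((1 + a) ^ 2 - a ^ 2 * s ^ 2) = p at *
  have hh0 : 0 ≤ h := by rw [hh]; linarith
  have hP : h * ((p + q) / 2) = a := by rw [hh]; linear_combination (hp2 - hq2) / 4
  have hS : h ^ 2 + ((p + q) / 2) ^ 2 = 1 + a ^ 2 - a ^ 2 * s ^ 2 := by
    rw [hh]; linear_combination (hp2 + hq2) / 2
  have Q : (h ^ 2) ^ 2 - (1 + a ^ 2 - a ^ 2 * s ^ 2) * h ^ 2 + a ^ 2 = 0 := by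
    rw [← hS, ← hP]; ring
  have hH : h ^ 2 ≤ 1 / 2 := by
    have : h ≤ (p + q) / 2 := by rw [hh]; linarith
    nlinarith
  have hD : ∀ x : ℝ, x ^ 2 ≤ 1 → 0 < 1 - a ^ 2 * (x - s) ^ 2 := fun x hx =>
    aux_pos a s x ha ha2 hs1 hx hne
  have bound : ∀ k : ℝ, |hfun ρ ν k| ≤ h := by
    intro k
    have hd := hD (Real.sin k) (Real.sin_sq_le_one k)
    have key := aux_alg a s (h ^ 2) (Real.sin k) Q
    rw [hf, abs_div, abs_of_nonneg (Real.sqrt_nonneg _), div_le_iff₀ (Real.sqrt_pos.mpr hd)]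
    apply abs_le_of_sq_le_sq _ (by positivity)
    rw [mul_pow, mul_pow, Real.sq_sqrt hd.le, Real.cos_sq']
    have := nonneg_of_mul_nonneg_right (key ▸ sq_nonneg _) (by linarith : 0 < 1 - h ^ 2)
    linarith
  have att : ∃ k : ℝ, hfun ρ ν k = h := by
    have h1H : 0 < 1 - h ^ 2 := by linarith
    obtain ⟨x, hx⟩ : ∃ x : ℝ, (1 - h ^ 2) * x + h ^ 2 * s = 0 :=
      ⟨-(h ^ 2 * s) / (1 - h ^ 2), by field_simp; ring⟩
    have hx1 : x ^ 2 ≤ 1 := by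
      have e : ((1 - h ^ 2) * x) ^ 2 = (h ^ 2 * s) ^ 2 := by
        rw [eq_neg_of_add_eq_zero_left hx]; ring
      have e2 : (h ^ 2) ^ 2 ≤ (1 - h ^ 2) ^ 2 := by nlinarith
      have e3 : (h ^ 2 * s) ^ 2 ≤ (1 - h ^ 2) ^ 2 := by
        rw [mul_pow]; nlinarith [mul_nonneg (sq_nonneg (h ^ 2)) (sub_nonneg.mpr hs1)]
      rw [← e, mul_pow] at e3
      have : 0 < (1 - h ^ 2) ^ 2 := by positivity
      exact le_of_mul_le_mul_left (by rw [mul_one]; exact e3) this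
    have hd := hD x hx1
    have key := aux_alg a s (h ^ 2) x Q
    rw [hx, mul_zero, zero_pow two_ne_zero] at key
    have key2 := (mul_eq_zero.mp key).resolve_left h1H.ne'
    have hxx := abs_le.mp (abs_le_one_iff_mul_self_le_one.mpr (by rw [← sq]; exact hx1 : x * x ≤ 1))
    refine ⟨Real.arcsin x, ?_⟩
    rw [hf, Real.sin_arcsin hxx.1 hxx.2, Real.cos_arcsin, div_eq_iff (Real.sqrt_pos.mpr hd).ne']
    have hx0 : 0 ≤ 1 - x ^ 2 := by linarith
    rw [← sq_eq_sq₀ (by positivity) (by positivity), mul_pow, mul_pow, Real.sq_sqrt hd.le,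
      Real.sq_sqrt hx0]
    linarith
  refine ⟨bound, att, ?_⟩
  obtain ⟨k, hk⟩ := att
  have hk' : hfun ρ ν (π - k) = -h := by
    rw [← hk, hf, hf, Real.sin_pi_sub, Real.cos_pi_sub]; ring
  have hc : Continuous (hfun ρ ν) := by
    rw [funext hf]
    refine Continuous.div (by fun_prop) (by fun_prop) fun k => ?_
    exact (Real.sqrt_pos.mpr (hD _ (Real.sin_sq_le_one k))).ne'
  apply Set.Subset.antisymm
  · rintro _ ⟨j, rfl⟩
    exact abs_le.mp (bound j)
  · have := intermediate_value_univ (π - k) k hc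
    rwa [hk, hk'] at this

end
end

section
/- Fix ρ ∈ (0,1) and ν ∈ ℝ. Then ξ(h*) = 0 and ξ(−h*) = 0; ξ(x) > 0 for every x with |x| < h*; and η₊(x) ≥ 0 and η₋(x) ≥ 0 for every x with |x| ≤ h*. -/
open Real

noncomputable section

/-- `ξ(x) = (ρ²−x²)(ρ₀²−x²) − ρ²ρ₀²(cos²ν)x²`. -/
def xif (ρ ν x : ℝ) : ℝ :=
  (ρ ^ 2 - x ^ 2) * ((rz ρ) ^ 2 - x ^ 2) - ρ ^ 2 * (rz ρ) ^ 2 * (Real.cos ν) ^ 2 * x ^ 2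

/-- `η₊(x)`. -/
def etaP (ρ ν x : ℝ) : ℝ :=
  1 - ρ ^ 2 * (rz ρ) ^ 2 * (1 + (Real.sin ν) ^ 2)
    - (1 - ρ ^ 2 * (rz ρ) ^ 2 * (Real.cos ν) ^ 2) * x ^ 2
    + 2 * ρ * rz ρ * Real.sin ν * Real.sqrt (xif ρ ν x)

/-- `η₋(x)`. -/
def etaM (ρ ν x : ℝ) : ℝ :=
  1 - ρ ^ 2 * (rz ρ) ^ 2 * (1 + (Real.sin ν) ^ 2)
    - (1 - ρ ^ 2 * (rz ρ) ^ 2 * (Real.cos ν) ^ 2) * x ^ 2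
    - 2 * ρ * rz ρ * Real.sin ν * Real.sqrt (xif ρ ν x)

/-- `ξ(±h*) = 0`, `ξ > 0` on `|x| < h*`, and `η_± ≥ 0` on `|x| ≤ h*`. -/
theorem stmt11 (ρ ν : ℝ) (hρ : ρ ∈ Set.Ioo (0 : ℝ) 1) :
    xif ρ ν (hstar ρ ν) = 0 ∧ xif ρ ν (-(hstar ρ ν)) = 0 ∧
    (∀ x : ℝ, |x| < hstar ρ ν → 0 < xif ρ ν x) ∧
    (∀ x : ℝ, |x| ≤ hstar ρ ν → 0 ≤ etaP ρ ν x ∧ 0 ≤ etaM ρ ν x) := by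
  obtain ⟨h0, h1⟩ := hρ
  have hz2 : rz ρ ^ 2 = 1 - ρ ^ 2 := Real.sq_sqrt (by nlinarith)
  have hz0 : 0 < rz ρ := Real.sqrt_pos.mpr (by nlinarith)
  obtain ⟨p, hp⟩ : ∃ p, p = ρ * rz ρ := ⟨_, rfl⟩
  have hp0 : 0 < p := by rw [hp]; positivity
  have hp2 : p ≤ 1 / 2 := by rw [hp]; nlinarith [sq_nonneg (ρ - rz ρ)]
  have hpp : ρ ^ 2 * rz ρ ^ 2 = p ^ 2 := by rw [hp]; ring
  have hcs : cos ν ^ 2 = 1 - sin ν ^ 2 := by rw [← Real.sin_sq_add_cos_sq ν]; ring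
  have hs1 : sin ν ^ 2 ≤ 1 := Real.sin_sq_le_one ν
  have hsa := Real.neg_one_le_sin ν
  have hsb := Real.sin_le_one ν
  have hx : ∀ x, xif ρ ν x = x ^ 4 - x ^ 2 * (1 + p ^ 2 * (1 - sin ν ^ 2)) + p ^ 2 := by
    intro x
    unfold xif
    rw [← hcs, ← hpp]
    linear_combination (-x ^ 2) * hz2
  have hh : hstar ρ ν = (1 / 2) * (√((1 + p) ^ 2 - p ^ 2 * sin ν ^ 2)
      - √((1 - p) ^ 2 - p ^ 2 * sin ν ^ 2)) := by
    unfold hstar; rw [hpp, ← hp]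
  have hP : ∀ x, etaP ρ ν x = 1 - p ^ 2 * (1 + sin ν ^ 2)
      - (1 - p ^ 2 * (1 - sin ν ^ 2)) * x ^ 2 + 2 * p * sin ν * √(xif ρ ν x) := by
    intro x; unfold etaP; rw [hpp, hcs, hp]; ring
  have hM : ∀ x, etaM ρ ν x = 1 - p ^ 2 * (1 + sin ν ^ 2)
      - (1 - p ^ 2 * (1 - sin ν ^ 2)) * x ^ 2 - 2 * p * sin ν * √(xif ρ ν x) := by
    intro x; unfold etaM; rw [hpp, hcs, hp]; ring
  generalize sin ν = s at *
  have hps : p ^ 2 * s ^ 2 ≤ p ^ 2 := by nlinarith [sq_nonneg p]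
  have hAi : 0 < (1 + p) ^ 2 - p ^ 2 * s ^ 2 := by nlinarith
  have hBi : 0 ≤ (1 - p) ^ 2 - p ^ 2 * s ^ 2 := by nlinarith
  have hA2 := Real.sq_sqrt hAi.le
  have hB2 := Real.sq_sqrt hBi
  have hA0 := Real.sqrt_pos.mpr hAi
  have hB0 := Real.sqrt_nonneg ((1 - p) ^ 2 - p ^ 2 * s ^ 2)
  generalize √((1 + p) ^ 2 - p ^ 2 * s ^ 2) = A at *
  generalize √((1 - p) ^ 2 - p ^ 2 * s ^ 2) = B at *
  generalize hstar ρ ν = h at *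
  obtain ⟨k, hk⟩ : ∃ k, k = (1 / 2) * (A + B) := ⟨_, rfl⟩
  have hhk : h * k = p := by rw [hh, hk]; linear_combination (1/4) * hA2 - (1/4) * hB2
  have hsum : h ^ 2 + k ^ 2 = 1 + p ^ 2 * (1 - s ^ 2) := by
    rw [hh, hk]; linear_combination (1/2) * hA2 + (1/2) * hB2
  have hk0 : 0 < k := by rw [hk]; linarith
  have hle : h ≤ k := by rw [hk, hh]; linarith
  have hpos : 0 < h := by
    by_contra hc
    have := mul_nonpos_of_nonpos_of_nonneg (not_lt.mp hc) hk0.le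
    linarith
  have hf : ∀ x, xif ρ ν x = (h ^ 2 - x ^ 2) * (k ^ 2 - x ^ 2) := by
    intro x; rw [hx, ← hsum, ← hhk]; ring
  have hhk2 : h ^ 2 ≤ k ^ 2 := pow_le_pow_left₀ hpos.le hle 2
  have hhp : h ^ 2 ≤ p := by
    rw [← hhk, sq]; exact mul_le_mul_of_nonneg_left hle hpos.le
  refine ⟨by rw [hf]; ring, by rw [hf]; ring, ?_, ?_⟩
  · intro x hxl
    have : x ^ 2 < h ^ 2 := sq_lt_sq.mpr (by rwa [abs_of_pos hpos])
    rw [hf]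
    exact mul_pos (by linarith) (by linarith)
  · intro x hxl
    have hxy : x ^ 2 ≤ h ^ 2 := sq_le_sq.mpr (by rwa [abs_of_pos hpos])
    have hxi : 0 ≤ xif ρ ν x := by
      rw [hf]; exact mul_nonneg (by linarith) (by linarith)
    have hq := Real.sq_sqrt hxi
    have hE : 0 ≤ 1 - p ^ 2 * (1 + s ^ 2) - (1 - p ^ 2 * (1 - s ^ 2)) * x ^ 2 := by
      have e1 : 0 ≤ p ^ 2 * (1 - s ^ 2) := mul_nonneg (sq_nonneg p) (by linarith)
      have e2 : 0 ≤ p ^ 2 * (1 - s ^ 2) * x ^ 2 := mul_nonneg e1 (sq_nonneg x)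
      have e3 : 0 ≤ (1 - 2 * p) * (1 + p) := mul_nonneg (by linarith) (by linarith)
      linarith
    have hC : 0 ≤ (1 - p ^ 2 * (1 + s) ^ 2) * (1 - p ^ 2 * (1 - s) ^ 2) := by
      apply mul_nonneg
      · have : (p * (1 + s)) ^ 2 ≤ 1 := by
          apply pow_le_one₀
          · exact mul_nonneg hp0.le (by linarith)
          · nlinarith only [hp0, hp2, hsa, hsb]
        rw [mul_pow] at this
        linarith
      · have : (p * (1 - s)) ^ 2 ≤ 1 := by
          apply pow_le_one₀
          · exact mul_nonneg hp0.le (by linarith)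
          · nlinarith only [hp0, hp2, hsa, hsb]
        rw [mul_pow] at this
        linarith
    have hkey : (2 * p * s * √(xif ρ ν x)) ^ 2 ≤
        (1 - p ^ 2 * (1 + s ^ 2) - (1 - p ^ 2 * (1 - s ^ 2)) * x ^ 2) ^ 2 := by
      rw [mul_pow, hq, hx]
      have := mul_nonneg (sq_nonneg (1 - x ^ 2)) hC
      linarith
    have := abs_le.mp (abs_le_of_sq_le_sq hkey hE)
    rw [hP, hM]
    constructor <;> linarith [this.1, this.2]

end
end

section
/- Fix ρ ∈ (0,1) and ν ∈ ℝ, and assume (ρ, ν) ≠ (1/√2, π/2 + nπ) for every integer n. Define h(k) = ρρ₀ cos k / √(1 − ρ²ρ₀²(sin k − sin ν)²). Then for every natural number r and every real number c, ∫_{−π}^{π} h(k)^r (1 + c·h(k)) dk/(2π) = ∫_{−h*}^{h*} x^r (1 + c·x) (√(η₊(x)) + √(η₋(x))) / (2π(1−x²)√(ξ(x))) dx. -/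
open Real

noncomputable section

def auD (a s k : ℝ) : ℝ := 1 - a ^ 2 * (sin k - s) ^ 2
def auH (a s k : ℝ) : ℝ := a * cos k / √(auD a s k)
def auN (a s u : ℝ) : ℝ := -a ^ 2 * s * u ^ 2 - (1 - a ^ 2 * (1 + s ^ 2)) * u - a ^ 2 * s
def auX (a s x : ℝ) : ℝ := a ^ 2 - (1 + a ^ 2 - a ^ 2 * s ^ 2) * x ^ 2 + x ^ 4
def auE (a s x : ℝ) : ℝ := 1 - a ^ 2 * (1 + s ^ 2) - (1 - a ^ 2 * (1 - s ^ 2)) * x ^ 2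
def auS (a s : ℝ) : ℝ := (1 / 2) * (√((1 + a) ^ 2 - a ^ 2 * s ^ 2) - √((1 - a) ^ 2 - a ^ 2 * s ^ 2))

lemma auD_pos {a s : ℝ} (ha : 0 < a) (H : a * (1 + |s|) < 1) (k : ℝ) : 0 < auD a s k := by
  unfold auD
  have h1 : |a * (sin k - s)| < 1 := by
    rw [abs_mul, abs_of_pos ha]
    have : |sin k - s| ≤ 1 + |s| := by
      have := abs_sub (sin k) s
      have := abs_sin_le_one k
      linarith
    nlinarith
  have := (sq_lt_one_iff_abs_lt_one (a * (sin k - s))).2 h1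
  rw [mul_pow] at this
  linarith

lemma auH_sq {a s : ℝ} (ha : 0 < a) (H : a * (1 + |s|) < 1) (k : ℝ) :
    auH a s k ^ 2 * auD a s k = a ^ 2 * (1 - sin k ^ 2) := by
  have hD := auD_pos ha H k
  unfold auH
  rw [div_pow, sq_sqrt hD.le, mul_pow, cos_sq']
  field_simp

lemma auX_eq {a s : ℝ} (ha : 0 < a) (H : a * (1 + |s|) < 1) (k : ℝ) :
    auX a s (auH a s k) = (a * auN a s (sin k) / auD a s k) ^ 2 := by
  have hD := auD_pos ha H k
  have h1 := auH_sq ha H k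
  have h2 : auH a s k ^ 2 = a ^ 2 * (1 - sin k ^ 2) / auD a s k := by
    field_simp; exact h1
  have h4 : auH a s k ^ 4 = (a ^ 2 * (1 - sin k ^ 2) / auD a s k) ^ 2 := by
    rw [← h2]; ring
  unfold auX
  rw [h2, h4]
  field_simp
  unfold auN auD
  ring

lemma au_one_sub {a s : ℝ} (ha : 0 < a) (H : a * (1 + |s|) < 1) (ha2 : a ≤ 1 / 2) (k : ℝ) :
    auH a s k ^ 2 ≤ a := by
  have hD := auD_pos ha H k
  have h1 := auH_sq ha H k
  have hs : a * |s| ≤ 1 - a := by linarith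
  have key : a ^ 2 * (1 - sin k ^ 2) ≤ a * auD a s k := by
    unfold auD
    set u := sin k
    have hu : |u| ≤ 1 := abs_sin_le_one k
    have h2 : |a * (u - s)| ≤ a * |u| + (1 - a) := by
      rw [abs_mul, abs_of_pos ha]
      have := abs_sub u s
      nlinarith
    have h3 : (a * (u - s)) ^ 2 ≤ (a * |u| + (1 - a)) ^ 2 := sq_le_sq.2 (h2.trans (le_abs_self _))
    have h5 : (a*(u-s))^2 ≤ 1 - a * (1 - |u| ^2) := by
      have h0 := abs_nonneg u
      nlinarith [mul_nonneg ha.le (sub_nonneg.2 hu), mul_nonneg (mul_nonneg ha.le (sub_nonneg.2 hu)) (sub_nonneg.2 ha2), mul_nonneg (mul_nonneg ha.le (sub_nonneg.2 hu)) h0, mul_nonneg (mul_nonneg (mul_nonneg ha.le (sub_nonneg.2 hu)) h0) (sub_nonneg.2 ha2), mul_nonneg (mul_nonneg ha.le (sub_nonneg.2 hu)) (sub_nonneg.2 hu)]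
    rw [sq_abs] at h5
    nlinarith
  by_contra hc
  push Not at hc
  nlinarith

lemma auE_eq {a s : ℝ} (ha : 0 < a) (H : a * (1 + |s|) < 1) (k : ℝ) :
    auE a s (auH a s k) + 2 * a * s * (-(a * auN a s (sin k) / auD a s k))
      = auD a s k * (1 - auH a s k ^ 2) ^ 2 := by
  have hD := auD_pos ha H k
  have h1 := auH_sq ha H k
  have h2 : auH a s k ^ 2 = a ^ 2 * (1 - sin k ^ 2) / auD a s k := by
    field_simp; exact h1
  unfold auE
  rw [h2]
  field_simp
  unfold auN auD
  ring

lemma auH_deriv {a s : ℝ} (ha : 0 < a) (H : a * (1 + |s|) < 1) (k : ℝ) :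
    HasDerivAt (auH a s) (a * auN a s (sin k) / auD a s k / √(auD a s k)) k := by
  have hD := auD_pos ha H k
  have h1 : HasDerivAt (auD a s) (-(a ^ 2 * (2 * (sin k - s) * cos k))) k := by
    have := ((((hasDerivAt_sin k).sub_const s).pow 2).const_mul (a ^ 2)).const_sub 1
    refine HasDerivAt.congr_deriv this ?_
    simp
  have h2 := ((hasDerivAt_cos k).const_mul a).div (h1.sqrt hD.ne') (sqrt_pos.2 hD).ne'
  refine HasDerivAt.congr_deriv h2 ?_
  have hq := sqrt_pos.2 hD
  have hqq : √(auD a s k) ^ 2 = auD a s k := sq_sqrt hD.le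
  have hc := cos_sq' k
  field_simp
  rw [hqq]
  have e : auN a s (sin k) = (-(sin k) * auD a s k + a ^ 2 * (sin k - s) * cos k ^ 2) := by
    rw [hc]; unfold auN auD; ring
  rw [e]
  ring

lemma auH_cont {a s : ℝ} (ha : 0 < a) (H : a * (1 + |s|) < 1) : Continuous (auH a s) :=
  continuous_iff_continuousAt.2 fun k => (auH_deriv ha H k).continuousAt

lemma auN_anti {a s : ℝ} (ha : 0 < a) (H : a * (1 + |s|) < 1) {u v : ℝ} (hu : |u| ≤ 1)
    (hv : |v| ≤ 1) (huv : u < v) : auN a s v < auN a s u := by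
  have h1 : a ^ 2 * (1 + s ^ 2 - s * (u + v)) < 1 := by
    have h2 : 1 + s ^ 2 - s * (u + v) ≤ (1 + |s|) ^ 2 := by
      have : |s * (u + v)| ≤ |s| * 2 := by
        rw [abs_mul]
        have := abs_add_le u v
        gcongr
        linarith
      have := neg_le_of_abs_le this
      nlinarith [sq_abs s]
    have h3 : (a * (1 + |s|)) ^ 2 < 1 := by
      have := abs_nonneg s
      rw [sq_lt_one_iff₀ (by positivity)]; exact H
    nlinarith [mul_le_mul_of_nonneg_left h2 (sq_nonneg a)]
  unfold auN
  nlinarith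

lemma au_root {a s : ℝ} (ha : 0 < a) (H : a * (1 + |s|) < 1) :
    ∃ u ∈ Set.Ioo (-1 : ℝ) 1, auN a s u = 0 := by
  have hc : Continuous (auN a s) := by unfold auN; fun_prop
  have h0 := abs_nonneg s
  have h1 : auN a s 1 < 0 := by
    have : |a * (1 - s)| < 1 := by
      rw [abs_mul, abs_of_pos ha]
      have := abs_sub 1 s
      simp at this
      nlinarith
    have := (sq_lt_one_iff_abs_lt_one _).2 this
    unfold auN; nlinarith
  have h2 : 0 < auN a s (-1) := by
    have : |a * (1 + s)| < 1 := by
      rw [abs_mul, abs_of_pos ha]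
      have := abs_add_le 1 s
      simp at this
      nlinarith
    have := (sq_lt_one_iff_abs_lt_one _).2 this
    unfold auN; nlinarith
  obtain ⟨u, hu, h⟩ := intermediate_value_Ioo' (by norm_num : (-1:ℝ) ≤ 1) hc.continuousOn ⟨h1, h2⟩
  exact ⟨u, hu, h⟩

lemma au_star {a s x : ℝ} (ha : 0 < a) (H : a * (1 + |s|) < 1) (hx : 0 ≤ x) (hxa : x ^ 2 ≤ a)
    (h0 : auX a s x = 0) : x = auS a s := by
  have hs := abs_nonneg s
  have hA : 0 < (1 - a) ^ 2 - a ^ 2 * s ^ 2 := by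
    rw [← sq_abs s]; 
    have : 0 ≤ a * |s| := by positivity
    nlinarith
  have hB : (1 + a) ^ 2 - a ^ 2 * s ^ 2 = ((1 - a) ^ 2 - a ^ 2 * s ^ 2) + 4 * a := by ring
  have hp := sqrt_pos.2 hA
  have hp2 := sq_sqrt hA.le
  have hq2 := sq_sqrt (show 0 ≤ (1 + a) ^ 2 - a ^ 2 * s ^ 2 by rw [hB]; positivity)
  have hpq : √((1 - a) ^ 2 - a ^ 2 * s ^ 2) < √((1 + a) ^ 2 - a ^ 2 * s ^ 2) :=
    sqrt_lt_sqrt hA.le (by rw [hB]; linarith)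
  unfold auS
  set p := √((1 - a) ^ 2 - a ^ 2 * s ^ 2)
  set q := √((1 + a) ^ 2 - a ^ 2 * s ^ 2)
  have e : auX a s x = (x ^ 2 - ((q - p) / 2) ^ 2) * (x ^ 2 - ((q + p) / 2) ^ 2) := by
    have e1 : (q ^ 2 - p ^ 2) / 4 = a := by rw [hp2, hq2]; ring
    have e2 : (q ^ 2 + p ^ 2) / 2 = 1 + a ^ 2 - a ^ 2 * s ^ 2 := by rw [hp2, hq2]; ring
    unfold auX
    rw [← e2]; rw [show a ^ 2 = ((q ^ 2 - p ^ 2) / 4) ^ 2 by rw [e1]]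
    ring
  rw [e] at h0
  rcases mul_eq_zero.1 h0 with h | h
  · have : x = (q - p) / 2 := by
      apply (pow_left_inj₀ hx (by linarith) (two_ne_zero)).1; linarith
    linarith
  · exfalso
    nlinarith

lemma au_int (g : ℝ → ℝ) {a s : ℝ} (ha : 0 < a) (H : a * (1 + |s|) < 1) (ha2 : a ≤ 1 / 2)
    (hg : Continuous g) (σ : ℝ) (hσ : σ ^ 2 = 1) {p q m : ℝ} (hpq : p < q)
    (hsgn : ∀ k ∈ Set.Ioo p q, 0 < -(σ * auN a s (sin k)))
    (hp : auH a s p = σ * m) (hq : auH a s q = -(σ * m)) (hm : 0 ≤ m) :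
    MeasureTheory.IntegrableOn (fun x => g x * √(auE a s x + 2 * a * s * (σ * √(auX a s x))) /
        ((1 - x ^ 2) * √(auX a s x))) (Set.Ioo (-m) m) ∧
    ∫ k in p..q, g (auH a s k) = ∫ x in Set.Ioo (-m) m,
      g x * √(auE a s x + 2 * a * s * (σ * √(auX a s x))) /
        ((1 - x ^ 2) * √(auX a s x)) := by
  set f' : ℝ → ℝ := fun k => a * auN a s (sin k) / auD a s k / √(auD a s k) with hf'
  have hder : ∀ k ∈ Set.Ioo p q, HasDerivWithinAt (auH a s) (f' k) (Set.Ioo p q) k :=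
    fun k _ => (auH_deriv ha H k).hasDerivWithinAt
  have hcont := auH_cont ha H
  have hanti : StrictAntiOn (fun k => σ * auH a s k) (Set.Icc p q) := by
    apply strictAntiOn_of_deriv_neg (convex_Icc p q) (by fun_prop)
    intro k hk
    rw [interior_Icc] at hk
    rw [((auH_deriv ha H k).const_mul σ).deriv]
    have h1 := hsgn k hk
    have hD := auD_pos ha H k
    have : σ * (a * auN a s (sin k) / auD a s k / √(auD a s k))
      = - (a * (-(σ * auN a s (sin k))) / auD a s k / √(auD a s k)) := by ring
    rw [this]
    have := sqrt_pos.2 hD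
    have : 0 < (a * (-(σ * auN a s (sin k))) / auD a s k / √(auD a s k)) := by positivity
    linarith
  have hinj : Set.InjOn (auH a s) (Set.Ioo p q) := by
    intro x hx y hy hxy
    exact hanti.injOn (Set.Ioo_subset_Icc_self hx) (Set.Ioo_subset_Icc_self hy)
      (by simp only [hxy])
  have himg' : ∀ k ∈ Set.Ioo p q, -m < σ * auH a s k ∧ σ * auH a s k < m := by
    intro k hk
    have h1 := hanti (Set.left_mem_Icc.2 hpq.le) (Set.Ioo_subset_Icc_self hk) hk.1
    have h2 := hanti (Set.Ioo_subset_Icc_self hk) (Set.right_mem_Icc.2 hpq.le) hk.2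
    simp only [hp, hq] at h1 h2
    constructor <;> nlinarith
  have hσ' : σ = 1 ∨ σ = -1 := by
    have : (σ - 1) * (σ + 1) = 0 := by linarith
    rcases mul_eq_zero.1 this with h | h
    · left; linarith
    · right; linarith
  have himg : auH a s '' Set.Ioo p q = Set.Ioo (-m) m := by
    apply Set.Subset.antisymm
    · rintro _ ⟨k, hk, rfl⟩
      have := himg' k hk
      rcases hσ' with rfl | rfl <;> constructor <;> linarith
    · rcases hσ' with rfl | rfl
      · have := intermediate_value_Ioo' hpq.le hcont.continuousOn
        rwa [hp, hq, one_mul] at this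
      · have := intermediate_value_Ioo hpq.le hcont.continuousOn
        rw [hp, hq] at this; simpa using this
  have heq : Set.EqOn (fun k => |f' k| • (g (auH a s k) * √(auE a s (auH a s k) + 2 * a * s * (σ * √(auX a s (auH a s k)))) /
        ((1 - (auH a s k) ^ 2) * √(auX a s (auH a s k))))) (fun k => g (auH a s k)) (Set.Ioo p q) := by
    intro k hk
    have hD := auD_pos ha H k
    have hDs := sqrt_pos.2 hD
    have h1 := hsgn k hk
    have hX : √(auX a s (auH a s k)) = a * (-(σ * auN a s (sin k))) / auD a s k := by
      rw [auX_eq ha H, sqrt_eq_iff_mul_self_eq_of_pos (by positivity)]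
      have : (a * -(σ * auN a s (sin k)) / auD a s k) * (a * -(σ * auN a s (sin k)) / auD a s k)
        = σ ^ 2 * (a * auN a s (sin k) / auD a s k) ^ 2 := by ring
      rw [this, hσ, one_mul]
    have h2 := au_one_sub ha H ha2 k
    have hE : √(auE a s (auH a s k) + 2 * a * s * (σ * √(auX a s (auH a s k))))
        = √(auD a s k) * (1 - auH a s k ^ 2) := by
      rw [hX]
      have : σ * (a * -(σ * auN a s (sin k)) / auD a s k) = σ ^ 2 * (-(a * auN a s (sin k) / auD a s k)) := by ring
      rw [this, hσ, one_mul, auE_eq ha H, sqrt_mul hD.le, sqrt_sq (by linarith)]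
    have hf : |f' k| = a * (-(σ * auN a s (sin k))) / auD a s k / √(auD a s k) := by
      have : |f' k| = |σ * f' k| := by
        rw [abs_mul]; rcases hσ' with rfl | rfl <;> simp
      rw [this, ← abs_neg]
      have : -(σ * f' k) = a * (-(σ * auN a s (sin k))) / auD a s k / √(auD a s k) := by
        simp only [hf']; ring
      rw [this, abs_of_pos (by positivity)]
    have h3 : 0 < 1 - auH a s k ^ 2 := by linarith
    simp only [smul_eq_mul]
    rw [hE, hX, hf]
    have h4 : σ * auN a s (sin k) ≠ 0 := by intro h; simp [h] at h1
    have h5 : σ ≠ 0 := left_ne_zero_of_mul h4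
    have h6 : auN a s (sin k) ≠ 0 := right_ne_zero_of_mul h4
    field_simp
  constructor
  · rw [← himg, MeasureTheory.integrableOn_image_iff_integrableOn_abs_deriv_smul measurableSet_Ioo hder hinj,
      MeasureTheory.integrableOn_congr_fun heq measurableSet_Ioo]
    have : Continuous (fun k => g (auH a s k)) := by fun_prop
    exact (this.integrableOn_Icc).mono_set Set.Ioo_subset_Icc_self
  · rw [intervalIntegral.integral_of_le hpq.le, MeasureTheory.integral_Ioc_eq_integral_Ioo, ← himg,
      MeasureTheory.integral_image_eq_integral_abs_deriv_smul measurableSet_Ioo hder hinj,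
      MeasureTheory.setIntegral_congr_fun measurableSet_Ioo heq]

lemma au_main (g : ℝ → ℝ) {a s : ℝ} (ha : 0 < a) (H : a * (1 + |s|) < 1) (ha2 : a ≤ 1 / 2)
    (hg : Continuous g) :
    ∫ k in (-π)..π, g (auH a s k) = ∫ x in (-(auS a s))..(auS a s),
      g x * (√(auE a s x + 2 * a * s * √(auX a s x)) + √(auE a s x - 2 * a * s * √(auX a s x))) /
        ((1 - x ^ 2) * √(auX a s x)) := by
  obtain ⟨u, ⟨hu1, hu2⟩, hu⟩ := au_root ha H
  set k0 := arcsin u with hk0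
  have hsin : sin k0 = u := sin_arcsin hu1.le hu2.le
  have hk1 : -(π / 2) < k0 := neg_pi_div_two_lt_arcsin.2 hu1
  have hk2 : k0 < π / 2 := arcsin_lt_pi_div_two.2 hu2
  have hcos : 0 < cos k0 := cos_pos_of_mem_Ioo ⟨hk1, hk2⟩
  have hX : auX a s (auH a s k0) = 0 := by rw [auX_eq ha H, hsin, hu]; simp
  have hHpos : 0 ≤ auH a s k0 := by unfold auH; positivity
  have hS : auH a s k0 = auS a s := au_star ha H hHpos (au_one_sub ha H ha2 k0) hX
  have hS0 : 0 ≤ auS a s := hS ▸ hHpos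
  have hper : Function.Periodic (auH a s) (2 * π) := by
    intro k; unfold auH auD; rw [sin_add_two_pi, cos_add_two_pi]
  have hSm : auH a s (π - k0) = -auS a s := by
    rw [← hS]; unfold auH auD; rw [sin_pi_sub, cos_pi_sub]; ring
  have hSp : auH a s (k0 + 2 * π) = auS a s := by rw [hper, hS]
  have hcont := auH_cont ha H
  have hgc : Continuous (fun k => g (auH a s k)) := by fun_prop
  have hN1 : ∀ k, u < sin k → auN a s (sin k) < 0 := fun k hk => by
    rw [← hu]
    exact auN_anti ha H (abs_le.2 ⟨hu1.le, hu2.le⟩) (abs_sin_le_one k) hk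
  have hN2 : ∀ k, sin k < u → 0 < auN a s (sin k) := fun k hk => by
    rw [← hu]
    exact auN_anti ha H (abs_sin_le_one k) (abs_le.2 ⟨hu1.le, hu2.le⟩) hk
  have A := au_int g ha H ha2 hg 1 (by norm_num) (p := k0) (q := π - k0) (m := auS a s) (by linarith)
    (by
      intro k hk
      have : u < sin k := by
        rw [← hsin, ← sub_pos, sin_sub_sin]
        have h1 : 0 < sin ((k - k0) / 2) := sin_pos_of_pos_of_lt_pi (by linarith [hk.1]) (by linarith [hk.2])
        have h2 : 0 < cos ((k + k0) / 2) := cos_pos_of_mem_Ioo ⟨by linarith [hk.1], by linarith [hk.2]⟩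
        positivity
      linarith [hN1 k this]) (by rw [hS]; ring) (by rw [hSm]; ring) hS0
  have B := au_int g ha H ha2 hg (-1) (by norm_num) (p := π - k0) (q := k0 + 2 * π) (m := auS a s) (by linarith)
    (by
      intro k hk
      have : sin k < u := by
        rw [← hsin, ← sub_neg, sin_sub_sin]
        have h1 : 0 < sin ((k - k0) / 2) := sin_pos_of_pos_of_lt_pi (by linarith [hk.1]) (by linarith [hk.2])
        have h2 : cos ((k + k0) / 2) < 0 := cos_neg_of_pi_div_two_lt_of_lt (by linarith [hk.1]) (by linarith [hk.2])
        nlinarith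
      linarith [hN2 k this]) (by rw [hSm]; ring) (by rw [hSp]; ring) hS0
  have hP : ∫ k in (-π)..π, g (auH a s k) = ∫ k in k0..(k0 + 2 * π), g (auH a s k) := by
    have hper' : Function.Periodic (fun k => g (auH a s k)) (2 * π) := fun k => by
      simp only [hper k]
    rw [← hper'.intervalIntegral_add_eq (-π) k0]
    congr 1; ring
  rw [hP, ← intervalIntegral.integral_add_adjacent_intervals (hgc.intervalIntegrable k0 (π - k0))
    (hgc.intervalIntegrable _ _), A.2, B.2, ← MeasureTheory.integral_add A.1 B.1,
    intervalIntegral.integral_of_le (by linarith), MeasureTheory.integral_Ioc_eq_integral_Ioo]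
  congr 1
  ext x
  rw [show auE a s x + 2 * a * s * (1 * √(auX a s x)) = auE a s x + 2 * a * s * √(auX a s x) by ring,
    show auE a s x + 2 * a * s * (-1 * √(auX a s x)) = auE a s x - 2 * a * s * √(auX a s x) by ring]
  ring

/-- change of variable identity for the moment integrals. -/
theorem stmt13 (ρ ν : ℝ) (hρ : ρ ∈ Set.Ioo (0 : ℝ) 1)
    (hexc : ∀ n : ℤ, ¬(ρ = 1 / Real.sqrt 2 ∧ ν = π / 2 + n * π))
    (r : ℕ) (c : ℝ) :
    ∫ k in (-π)..π, (hfun ρ ν k) ^ r * (1 + c * hfun ρ ν k) / (2 * π)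
      = ∫ x in (-(hstar ρ ν))..(hstar ρ ν),
          x ^ r * (1 + c * x) * (Real.sqrt (etaP ρ ν x) + Real.sqrt (etaM ρ ν x))
            / (2 * π * (1 - x ^ 2) * Real.sqrt (xif ρ ν x)) := by
  obtain ⟨h0, h1⟩ := hρ
  have hz : 0 < 1 - ρ ^ 2 := by nlinarith
  have hzp : 0 < rz ρ := sqrt_pos.2 hz
  have hz2 : rz ρ ^ 2 = 1 - ρ ^ 2 := sq_sqrt hz.le
  have ha : 0 < ρ * rz ρ := mul_pos h0 hzp
  have ha2 : ρ * rz ρ ≤ 1 / 2 := by nlinarith [sq_nonneg (ρ - rz ρ)]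
  have hs : |sin ν| ≤ 1 := abs_sin_le_one ν
  have H : ρ * rz ρ * (1 + |sin ν|) < 1 := by
    by_contra hc
    push Not at hc
    have e1 : ρ * rz ρ = 1 / 2 := by nlinarith [abs_nonneg (sin ν)]
    have e2 : |sin ν| = 1 := by rw [e1] at hc; linarith
    have e3 : cos ν = 0 := by
      have := sin_sq_add_cos_sq ν
      rw [← sq_abs (sin ν), e2] at this
      exact pow_eq_zero_iff two_ne_zero |>.1 (by linarith)
    obtain ⟨n, hn⟩ := cos_eq_zero_iff.1 e3
    refine hexc n ⟨?_, by rw [hn]; ring⟩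
    have e4 : ρ = rz ρ := by
      have : (ρ - rz ρ) ^ 2 = 0 := by nlinarith
      linarith [pow_eq_zero_iff two_ne_zero |>.1 this]
    have e5 : ρ ^ 2 = 1 / 2 := by rw [← e4] at hz2; linarith
    rw [← sqrt_sq h0.le, e5, sqrt_div zero_le_one, sqrt_one]
  have M := au_main (fun x => x ^ r * (1 + c * x) / (2 * π)) ha H ha2 (by fun_prop)
  have eh : hstar ρ ν = auS (ρ * rz ρ) (sin ν) := by
    unfold hstar auS; rw [mul_pow ρ]
  have ehf : ∀ k, hfun ρ ν k = auH (ρ * rz ρ) (sin ν) k := fun k => by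
    unfold hfun auH auD; rw [mul_pow ρ]
  have ex : ∀ x, xif ρ ν x = auX (ρ * rz ρ) (sin ν) x := fun x => by
    unfold xif auX; rw [mul_pow ρ, cos_sq', hz2]; ring
  have ep : ∀ x, etaP ρ ν x = auE (ρ * rz ρ) (sin ν) x + 2 * (ρ * rz ρ) * sin ν * √(auX (ρ * rz ρ) (sin ν) x) := fun x => by
    unfold etaP auE; rw [ex, mul_pow ρ, cos_sq']; ring
  have em : ∀ x, etaM ρ ν x = auE (ρ * rz ρ) (sin ν) x - 2 * (ρ * rz ρ) * sin ν * √(auX (ρ * rz ρ) (sin ν) x) := fun x => by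
    unfold etaM auE; rw [ex, mul_pow ρ, cos_sq']; ring
  simp only [ehf, eh, ep, em, ex]
  rw [M]
  congr 1
  ext x
  rw [mul_assoc (2 * π), div_mul_eq_mul_div, div_div]

end
end

section
/- Fix ρ ∈ (0,1) and ν ∈ ℝ, assume (ρ, ν) ≠ (1/√2, π/2 + nπ) for every integer n, and let α, β ∈ ℂ with |α|² + |β|² = 1. Then the limit density function integrates to one: ∫_{−h*}^{h*} (√(η₊(x)) + √(η₋(x))) · γ(x) / (2π(1−x²)√(ξ(x))) dx = 1. -/
open Real

noncomputable section

/-- `γ(x)`. -/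
def gam (ρ ν : ℝ) (α β : ℂ) (x : ℝ) : ℝ :=
  1 + (‖α‖ ^ 2 - ‖β‖ ^ 2
    - (2 * rz ρ / ρ) * ((α * (starRingEnd ℂ) β).re * Real.cos ν
        - (α * (starRingEnd ℂ) β).im * Real.sin ν)) * x

/-- Antiderivative of the Konno density. -/
lemma konno_deriv (h x : ℝ) (h0 : 0 < h) (h1 : h < 1) (hx : x ∈ Set.Ioo (-h) h) :
    HasDerivAt (fun x => Real.arcsin (√(1 - h ^ 2) * x / (h * √(1 - x ^ 2))))
      (√(1 - h ^ 2) / ((1 - x ^ 2) * √(h ^ 2 - x ^ 2))) x := by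
  obtain ⟨hxl, hxr⟩ := hx
  have hxx : 0 < h ^ 2 - x ^ 2 := by nlinarith
  have hh : 0 < 1 - h ^ 2 := by nlinarith
  have hx1 : 0 < 1 - x ^ 2 := by linarith
  set w := √(1 - x ^ 2) with hw
  set k := √(1 - h ^ 2) with hk
  set t := √(h ^ 2 - x ^ 2) with ht
  have hw0 : 0 < w := Real.sqrt_pos.2 hx1
  have ht0 : 0 < t := Real.sqrt_pos.2 hxx
  have hw2 : w ^ 2 = 1 - x ^ 2 := Real.sq_sqrt hx1.le
  have hk2 : k ^ 2 = 1 - h ^ 2 := Real.sq_sqrt hh.le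
  have ht2 : t ^ 2 = h ^ 2 - x ^ 2 := Real.sq_sqrt hxx.le
  have e1 : 1 - (k * x / (h * w)) ^ 2 = (t / (h * w)) ^ 2 := by
    field_simp
    rw [hw2, hk2, ht2]; ring
  have hpos : 0 < t / (h * w) := by positivity
  have hne1 : k * x / (h * w) ≠ 1 := by
    intro h'
    rw [h'] at e1
    nlinarith
  have hne2 : k * x / (h * w) ≠ -1 := by
    intro h'
    rw [h'] at e1
    nlinarith
  have d1 : HasDerivAt (fun x : ℝ => √(1 - x ^ 2)) (-x / w) x := by
    have := ((hasDerivAt_pow 2 x).const_sub 1).sqrt hx1.ne'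
    convert this using 1
    rw [← hw]; field_simp; norm_num; ring
  have d2 := ((hasDerivAt_id x).const_mul k).div (d1.const_mul h) (by positivity)
  have d3 := (Real.hasDerivAt_arcsin hne2 hne1).comp x d2
  refine d3.congr_deriv ?_
  rw [e1, Real.sqrt_sq hpos.le, ← hw, ← hw2]
  simp only [id]
  field_simp
  rw [hw2]; ring

lemma konno_integral (h : ℝ) (h0 : 0 < h) (h1 : h < 1) :
    IntervalIntegrable (fun x => √(1 - h ^ 2) / ((1 - x ^ 2) * √(h ^ 2 - x ^ 2)))
      MeasureTheory.volume (-h) h ∧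
    ∫ x in (-h)..h, √(1 - h ^ 2) / ((1 - x ^ 2) * √(h ^ 2 - x ^ 2)) = π := by
  have hh : 0 < 1 - h ^ 2 := by nlinarith
  have hc : ContinuousOn (fun x => Real.arcsin (√(1 - h ^ 2) * x / (h * √(1 - x ^ 2))))
      (Set.Icc (-h) h) := by
    refine Real.continuous_arcsin.comp_continuousOn ?_
    refine ContinuousOn.div (by fun_prop) (by fun_prop) ?_
    intro x hx
    have : 0 < 1 - x ^ 2 := by nlinarith [hx.1, hx.2]
    have := Real.sqrt_pos.2 this
    positivity
  have hd := fun x hx => konno_deriv h x h0 h1 hx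
  have hle : -h ≤ h := by linarith
  have hi : IntervalIntegrable (fun x => √(1 - h ^ 2) / ((1 - x ^ 2) * √(h ^ 2 - x ^ 2)))
      MeasureTheory.volume (-h) h := by
    apply intervalIntegral.intervalIntegrable_deriv_of_nonneg
      (g := fun x => Real.arcsin (√(1 - h ^ 2) * x / (h * √(1 - x ^ 2))))
    · rwa [Set.uIcc_of_le hle]
    · rw [min_eq_left hle, max_eq_right hle]; exact hd
    · rw [min_eq_left hle, max_eq_right hle]
      intro x hx
      have : 0 < 1 - x ^ 2 := by nlinarith [hx.1, hx.2]
      positivity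
  refine ⟨hi, ?_⟩
  rw [intervalIntegral.integral_eq_sub_of_hasDerivAt_of_le hle hc hd hi]
  have hk : √(1 - h ^ 2) ≠ 0 := (Real.sqrt_pos.2 hh).ne'
  have e1 : √(1 - h ^ 2) * h / (h * √(1 - h ^ 2)) = 1 := by field_simp
  have e2 : √(1 - h ^ 2) * (-h) / (h * √(1 - (-h) ^ 2)) = -1 := by
    rw [neg_sq]; field_simp
  simp only [e1, e2, Real.arcsin_one, Real.arcsin_neg_one]
  ring

lemma konno_gamma (h c : ℝ) (h0 : 0 < h) (h1 : h < 1) :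
    ∫ x in (-h)..h, √(1 - h ^ 2) / ((1 - x ^ 2) * √(h ^ 2 - x ^ 2)) * (1 + c * x) = π := by
  obtain ⟨hi, hv⟩ := konno_integral h h0 h1
  have hi2 := hi.mul_continuousOn (g := fun x => c * x) (by fun_prop)
  have hodd : ∫ x in (-h)..h, √(1 - h ^ 2) / ((1 - x ^ 2) * √(h ^ 2 - x ^ 2)) * (c * x) = 0 := by
    have := intervalIntegral.integral_comp_neg (a := -h) (b := h)
      (fun x => √(1 - h ^ 2) / ((1 - x ^ 2) * √(h ^ 2 - x ^ 2)) * (c * x))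
    simp only [neg_sq, mul_neg, neg_neg, intervalIntegral.integral_neg] at this
    linarith
  simp only [mul_add, mul_one]
  rw [intervalIntegral.integral_add hi hi2, hv, hodd, add_zero]

/-- Everything expressed through the two positive roots `h ≤ H` of `ξ`. -/
lemma hstar_facts (ρ ν : ℝ) (hρ : ρ ∈ Set.Ioo (0 : ℝ) 1) :
    ∃ H, 0 < hstar ρ ν ∧ hstar ρ ν < 1 ∧ hstar ρ ν ≤ H ∧ H ≤ 1 ∧ hstar ρ ν * H = ρ * rz ρ ∧
      hstar ρ ν ^ 2 + H ^ 2 = 1 + (ρ * rz ρ) ^ 2 * Real.cos ν ^ 2 := by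
  obtain ⟨r0, r1⟩ := hρ
  have hz : 0 < 1 - ρ ^ 2 := by nlinarith
  have hz0 : 0 < rz ρ := Real.sqrt_pos.2 hz
  have hz2 : rz ρ ^ 2 = 1 - ρ ^ 2 := Real.sq_sqrt hz.le
  unfold hstar
  have hP0 : 0 < ρ * rz ρ := by positivity
  have hP : ρ * rz ρ ≤ 1 / 2 := by nlinarith [sq_nonneg (ρ - rz ρ)]
  rw [← mul_pow]
  set P := ρ * rz ρ
  have hs := Real.sin_sq_add_cos_sq ν
  have hS0 := sq_nonneg (Real.sin ν)
  have hC0 := sq_nonneg (Real.cos ν)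
  set S := Real.sin ν ^ 2
  set C := Real.cos ν ^ 2
  have hb : 0 ≤ (1 - P) ^ 2 - P ^ 2 * S := by
    have : P ^ 2 * S ≤ P ^ 2 * 1 := by gcongr; linarith
    nlinarith
  have ha : (1 - P) ^ 2 - P ^ 2 * S < (1 + P) ^ 2 - P ^ 2 * S := by nlinarith
  have hB := Real.sqrt_nonneg ((1 - P) ^ 2 - P ^ 2 * S)
  have hAB := Real.sqrt_lt_sqrt hb ha
  have hB2 := Real.sq_sqrt hb
  have hA2 := Real.sq_sqrt (hb.trans ha.le)
  set A := √((1 + P) ^ 2 - P ^ 2 * S)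
  set B := √((1 - P) ^ 2 - P ^ 2 * S)
  have e1 : 1 / 2 * (A - B) * (1 / 2 * (A + B)) = P := by linear_combination (hA2 - hB2) / 4
  have e2 : (1 / 2 * (A - B)) ^ 2 + (1 / 2 * (A + B)) ^ 2 = 1 + P ^ 2 * C := by
    linear_combination (hA2 + hB2) / 2 - P ^ 2 * hs
  have hp : 0 < 1 / 2 * (A - B) := by linarith
  have hle : 1 / 2 * (A - B) ≤ 1 / 2 * (A + B) := by linarith
  refine ⟨1 / 2 * (A + B), hp, ?_, hle, ?_, e1, e2⟩
  · nlinarith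
  · generalize 1 / 2 * (A - B) = h at *
    generalize 1 / 2 * (A + B) = H at *
    have hh : h ^ 2 < 1 := by nlinarith
    have hQ : 0 ≤ (1 - h ^ 2) * (1 - H ^ 2) := by
      have : (1 - h ^ 2) * (1 - H ^ 2) = P ^ 2 * S := by
        rw [← e1] at e2 ⊢; linear_combination (-1) * e2 - (h * H) ^ 2 * hs
      rw [this]; positivity
    have : 0 ≤ 1 - H ^ 2 := nonneg_of_mul_nonneg_right hQ (by linarith)
    exact (sq_le_one_iff₀ (by linarith)).1 (by linarith)

lemma integrand_eq (ρ ν x : ℝ) (hρ : ρ ∈ Set.Ioo (0 : ℝ) 1)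
    (hx : x ∈ Set.Ioo (-(hstar ρ ν)) (hstar ρ ν)) :
    (√(etaP ρ ν x) + √(etaM ρ ν x)) / √(xif ρ ν x) =
      2 * √(1 - hstar ρ ν ^ 2) / √(hstar ρ ν ^ 2 - x ^ 2) := by
  have hz2 : rz ρ ^ 2 = 1 - ρ ^ 2 := Real.sq_sqrt (by nlinarith [hρ.1, hρ.2])
  obtain ⟨H, h0, h1, hH, hH1, e1, e2⟩ := hstar_facts ρ ν hρ
  generalize hstar ρ ν = h at *
  have hs := Real.sin_sq_add_cos_sq ν
  have hxx : 0 < h ^ 2 - x ^ 2 := by nlinarith [hx.1, hx.2]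
  have hhH : h ^ 2 ≤ H ^ 2 := pow_le_pow_left₀ h0.le hH 2
  have hXX : 0 < H ^ 2 - x ^ 2 := by linarith
  have hh1 : 0 < 1 - h ^ 2 := by
    have := pow_lt_one₀ h0.le h1 two_ne_zero
    linarith
  have hHH1 : 0 ≤ 1 - H ^ 2 := by
    have := pow_le_one₀ (n := 2) (h0.le.trans hH) hH1
    linarith
  have hxi : xif ρ ν x = (h ^ 2 - x ^ 2) * (H ^ 2 - x ^ 2) := by
    unfold xif
    have : h ^ 2 * H ^ 2 = ρ ^ 2 * rz ρ ^ 2 := by rw [← mul_pow, e1, mul_pow]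
    linear_combination x ^ 2 * e2 - this - x ^ 2 * hz2
  have hQ : (ρ * rz ρ * Real.sin ν) ^ 2 = (1 - h ^ 2) * (1 - H ^ 2) := by
    rw [← e1] at e2 ⊢; linear_combination e2 + (h * H) ^ 2 * hs
  set q := ρ * rz ρ * Real.sin ν
  have hP2 : (ρ * rz ρ) ^ 2 = h ^ 2 * H ^ 2 := by rw [← e1]; ring
  set a := √(h ^ 2 - x ^ 2) with ha
  set b := √(H ^ 2 - x ^ 2) with hb
  have ha0 : 0 < a := Real.sqrt_pos.2 hxx
  have hb0 : 0 < b := Real.sqrt_pos.2 hXX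
  have ha2 : a ^ 2 = h ^ 2 - x ^ 2 := Real.sq_sqrt hxx.le
  have hb2 : b ^ 2 = H ^ 2 - x ^ 2 := Real.sq_sqrt hXX.le
  have hxs : √(xif ρ ν x) = a * b := by rw [hxi, Real.sqrt_mul hxx.le]
  set k := √(1 - h ^ 2) with hk
  set l := √(1 - H ^ 2) with hl
  have hk0 : 0 < k := Real.sqrt_pos.2 hh1
  have hl0 : 0 ≤ l := Real.sqrt_nonneg _
  have hk2 : k ^ 2 = 1 - h ^ 2 := Real.sq_sqrt hh1.le
  have hl2 : l ^ 2 = 1 - H ^ 2 := Real.sq_sqrt hHH1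
  have hlk : l * a ≤ k * b := by
    have h3 : l ≤ k := Real.sqrt_le_sqrt (by linarith)
    have h4 : a ≤ b := Real.sqrt_le_sqrt (by linarith)
    gcongr
  have hM : 1 - ρ ^ 2 * rz ρ ^ 2 * (1 + Real.sin ν ^ 2)
      - (1 - ρ ^ 2 * rz ρ ^ 2 * Real.cos ν ^ 2) * x ^ 2 = (k * b) ^ 2 + (l * a) ^ 2 := by
    have hq2 : ρ ^ 2 * rz ρ ^ 2 * Real.sin ν ^ 2 = (1 - h ^ 2) * (1 - H ^ 2) := by
      rw [← hQ]; ring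
    rw [mul_pow, mul_pow, hk2, hl2, ha2, hb2]
    linear_combination (-1) * hP2 - hq2 - x ^ 2 * e2
  have hqk : q ^ 2 = (k * l) ^ 2 := by rw [hQ, mul_pow, hk2, hl2]
  have hplus : √((k * b) ^ 2 + (l * a) ^ 2 + 2 * (k * l) * (a * b)) = k * b + l * a := by
    rw [← Real.sqrt_sq (show 0 ≤ k * b + l * a by positivity)]; congr 1; ring
  have hminus : √((k * b) ^ 2 + (l * a) ^ 2 - 2 * (k * l) * (a * b)) = k * b - l * a := by
    rw [← Real.sqrt_sq (show 0 ≤ k * b - l * a by linarith)]; congr 1; ring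
  have hsum : √(etaP ρ ν x) + √(etaM ρ ν x) = 2 * k * b := by
    unfold etaP etaM
    rw [hM, hxs]
    have hq' : 2 * ρ * rz ρ * Real.sin ν = 2 * q := by simp only [q]; ring
    rw [hq']
    rcases sq_eq_sq_iff_eq_or_eq_neg.1 hqk with h' | h'
    · rw [h', hplus, hminus]; ring
    · rw [h', mul_neg, neg_mul, sub_neg_eq_add, ← sub_eq_add_neg, hplus, hminus]; ring
  rw [hsum, hxs]
  field_simp

/-- the limit density function integrates to one. -/
theorem stmt14 (ρ ν : ℝ) (hρ : ρ ∈ Set.Ioo (0 : ℝ) 1)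
    (hexc : ∀ n : ℤ, ¬(ρ = 1 / Real.sqrt 2 ∧ ν = π / 2 + n * π))
    (α β : ℂ) (hαβ : ‖α‖ ^ 2 + ‖β‖ ^ 2 = 1) :
    ∫ x in (-(hstar ρ ν))..(hstar ρ ν),
        (Real.sqrt (etaP ρ ν x) + Real.sqrt (etaM ρ ν x)) * gam ρ ν α β x
          / (2 * π * (1 - x ^ 2) * Real.sqrt (xif ρ ν x)) = 1 := by
  obtain ⟨H, h0, h1, -⟩ := hstar_facts ρ ν hρ
  have hle : -hstar ρ ν ≤ hstar ρ ν := by linarith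
  have key := konno_gamma (hstar ρ ν) (‖α‖ ^ 2 - ‖β‖ ^ 2
    - (2 * rz ρ / ρ) * ((α * (starRingEnd ℂ) β).re * Real.cos ν
        - (α * (starRingEnd ℂ) β).im * Real.sin ν)) h0 h1
  have hcongr : ∫ x in (-(hstar ρ ν))..(hstar ρ ν),
        (Real.sqrt (etaP ρ ν x) + Real.sqrt (etaM ρ ν x)) * gam ρ ν α β x
          / (2 * π * (1 - x ^ 2) * Real.sqrt (xif ρ ν x)) =
      ∫ x in (-(hstar ρ ν))..(hstar ρ ν), (1 / π) *
        (√(1 - hstar ρ ν ^ 2) / ((1 - x ^ 2) * √(hstar ρ ν ^ 2 - x ^ 2)) * gam ρ ν α β x) := by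
    rw [intervalIntegral.integral_of_le hle, intervalIntegral.integral_of_le hle,
      MeasureTheory.integral_Ioc_eq_integral_Ioo, MeasureTheory.integral_Ioc_eq_integral_Ioo]
    refine MeasureTheory.setIntegral_congr_fun measurableSet_Ioo fun x hx => ?_
    have := integrand_eq ρ ν x hρ hx
    calc _ = (√(etaP ρ ν x) + √(etaM ρ ν x)) / √(xif ρ ν x) *
          (gam ρ ν α β x / (2 * π * (1 - x ^ 2))) := by
            simp only [div_eq_mul_inv, mul_inv]; ring
      _ = _ := by
            rw [this]; simp only [div_eq_mul_inv, mul_inv]; ring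
  rw [hcongr, intervalIntegral.integral_const_mul]
  unfold gam
  rw [key]
  field_simp

end
end
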